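/- Let n ≥ 1 be an integer, 0 < s < 1, 1 < p < ∞, and let u : ℝⁿ → ℝ be a measurable function that is 2π-periodic in the variable x₁ and has finite periodic Gagliardo seminorm [u]^{per}_{W^{s,p}}. Then [u^{*per}]^{per}_{W^{s,p}} = [u]^{per}_{W^{s,p}} holds if and only if u = |u| almost everywhere or u = −|u| almost everywhere, and there exists a ∈ ℝ such that u(x₁,x') = ± u^{*per}(x₁ + a, x') for almost every (x₁,x') ∈ ℝ × ℝ^{n−1} (with the sign matching that of u). -/

import Mathlib

open MeasureTheory Real
open scoped ENNReal

/-- For a measurable set `A ⊂ ℝ` of finite measure, `A^* := (−|A|/2, |A|/2)`. -/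
noncomputable def symmSet (A : Set ℝ) : Set ℝ :=
  Set.Ioo (-((volume A).toReal / 2)) ((volume A).toReal / 2)

/-- Symmetric decreasing rearrangement of a (nonnegative) function on `(−π,π)`:
`u^*(x) := ∫₀^∞ χ_{{u>t}^*}(x) dt`. -/
noncomputable def symmRearr (u : ℝ → ℝ) : ℝ → ℝ := fun x =>
  ∫ t in Set.Ioi (0 : ℝ),
    (symmSet {y | y ∈ Set.Ioo (-π) π ∧ t < u y}).indicator (fun _ => (1 : ℝ)) x

/-- The `2π`-periodic extension of (the restriction to `[−π,π)` of) a function. -/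
noncomputable def periodize (f : ℝ → ℝ) : ℝ → ℝ := fun x =>
  f (x - 2 * π * (⌊(x + π) / (2 * π)⌋ : ℝ))

/-- The periodic rearrangement `f^{*per}`: the `2π`-periodic extension of `(f·χ_{(−π,π)})^*`. -/
noncomputable def perRearr (f : ℝ → ℝ) : ℝ → ℝ := periodize (symmRearr f)
/-- `([u]^{per}_{W^{s,p}})^p`, the `p`-th power of the periodic Gagliardo seminorm on
`ℝⁿ = ℝ × ℝ^{n−1}` (so `n = m + 1`), for a function which is `2π`-periodic in the first
variable. -/
noncomputable def gagP (m : ℕ) (s p : ℝ) (u : ℝ × EuclideanSpace ℝ (Fin m) → ℝ) : ℝ≥0∞ :=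
  ∫⁻ x in {x : ℝ × EuclideanSpace ℝ (Fin m) | x.1 ∈ Set.Ioo (-π) π},
    ∫⁻ y : ℝ × EuclideanSpace ℝ (Fin m),
      ENNReal.ofReal (|u x - u y| ^ p /
        Real.sqrt ((x.1 - y.1) ^ 2 + ‖x.2 - y.2‖ ^ 2) ^ ((m : ℝ) + 1 + s * p))

/-- The periodic Gagliardo seminorm `[u]^{per}_{W^{s,p}}`. -/
noncomputable def gagSeminorm (m : ℕ) (s p : ℝ) (u : ℝ × EuclideanSpace ℝ (Fin m) → ℝ) :
    ℝ≥0∞ :=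
  gagP m s p u ^ (1 / p)
/-- The periodic rearrangement in the first variable:
`u^{*per}(x₁,x') := (|u(·,x')|)^{*per}(x₁)`. -/
noncomputable def perRearr1 (m : ℕ) (u : ℝ × EuclideanSpace ℝ (Fin m) → ℝ) :
    ℝ × EuclideanSpace ℝ (Fin m) → ℝ := fun x =>
  perRearr (fun t => |u (t, x.2)|) x.1

/-!
Functions which are `2π`-periodic in `x₁` live on the cylinder `𝕋 × ℝᵐ`, where the seminorm becomes
an energy `∬ φ (v x - v y) K(x, y)` with `φ = |·| ^ p` and `K` the periodized Riesz kernel. By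
subordination `K` is a superposition of theta functions, and each factor of the Jacobi triple
product shows that these decrease strictly in the distance on the circle.

For such a kernel a polarization `v ↦ polarize c v` lowers the energy, by convexity of `φ` applied
to the four values of `v` at a pair of points and their mirror images. On average over `c` a
polarization brings the subgraph of `v` closer to its Steiner symmetrization by a definite amount,
so a minimising sequence of polarized functions converges to the rearrangement, which proves the
inequality.

If equality holds, no polarization changes the energy of `|v|`, and strict convexity forces each of
them to be either trivial or the full reflection. A rotation that minimises the first moment of
the subgraph excludes reflections, so the rotated function is fixed by every polarization and hence
equals its rearrangement. The sign comes from the equality `φ (|a| - |b|) = φ (a - b)`, which holds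
only when `a` and `b` do not have opposite signs.
-/

namespace PeriodicRearrangement

open Filter Set Function HurwitzZeta
open scoped Topology symmDiff

section TripleProduct

variable {q : ℝ}

/-- The `q`-Pochhammer symbol `(q²; q²)ₙ`, in terms of the nome `q`. -/
noncomputable def nomePochhammer (q : ℝ) (n : ℕ) : ℝ :=
  ∏ j ∈ Finset.range n, (1 - q ^ (2 * (j + 1)))

/-- The reciprocal `1 / (q²; q²)ₙ`, extended by `0` to negative `n`; the extension makes the
recurrence `invNomePochhammer_sub_one` hold on all of `ℤ`. -/
noncomputable def invNomePochhammer (q : ℝ) (n : ℤ) : ℝ :=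
  if 0 ≤ n then (nomePochhammer q n.toNat)⁻¹ else 0

/-- The coefficient of `zᵏ` in the finite triple product
`∏_{j<N} (1 + z q^{2j+1}) (1 + z⁻¹ q^{2j+1})`, namely `q^{k²}` times a Gaussian binomial. -/
noncomputable def tripleCoeff (q : ℝ) (N : ℕ) (k : ℤ) : ℝ :=
  nomePochhammer q (2 * N) * q ^ (k ^ 2) * invNomePochhammer q (N - k) * invNomePochhammer q (N + k)

lemma nomePochhammer_succ (q : ℝ) (n : ℕ) :
    nomePochhammer q (n + 1) = nomePochhammer q n * (1 - q ^ (2 * (n + 1))) :=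
  Finset.prod_range_succ _ _

lemma nomePochhammer_pos (hq0 : 0 < q) (hq1 : q < 1) (n : ℕ) : 0 < nomePochhammer q n :=
  Finset.prod_pos fun j _ => sub_pos.2 (pow_lt_one₀ hq0.le hq1 (by omega))

lemma invNomePochhammer_of_neg {n : ℤ} (hn : n < 0) : invNomePochhammer q n = 0 :=
  if_neg (not_le.2 hn)

lemma invNomePochhammer_natCast (q : ℝ) (n : ℕ) :
    invNomePochhammer q n = (nomePochhammer q n)⁻¹ := by
  simp [invNomePochhammer]

lemma invNomePochhammer_pos (hq0 : 0 < q) (hq1 : q < 1) (n : ℕ) : 0 < invNomePochhammer q n := by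
  rw [invNomePochhammer_natCast]
  exact inv_pos.2 (nomePochhammer_pos hq0 hq1 n)

lemma invNomePochhammer_nonneg (hq0 : 0 < q) (hq1 : q < 1) (n : ℤ) : 0 ≤ invNomePochhammer q n := by
  rcases lt_or_ge n 0 with hn | hn
  · exact (invNomePochhammer_of_neg hn).ge
  · lift n to ℕ using hn
    exact (invNomePochhammer_pos hq0 hq1 n).le

lemma invNomePochhammer_sub_one (hq0 : 0 < q) (hq1 : q < 1) (n : ℤ) :
    invNomePochhammer q (n - 1) = (1 - q ^ (2 * n)) * invNomePochhammer q n := by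
  rcases lt_trichotomy n 0 with hn | rfl | hn
  · rw [invNomePochhammer_of_neg hn, invNomePochhammer_of_neg (by omega), mul_zero]
  · simp [invNomePochhammer]
  · obtain ⟨k, rfl⟩ : ∃ k : ℕ, n = (k + 1 : ℕ) := ⟨(n - 1).toNat, by omega⟩
    have hk : nomePochhammer q k ≠ 0 := (nomePochhammer_pos hq0 hq1 k).ne'
    have hpow : 1 - q ^ (2 * (k + 1)) ≠ 0 :=
      (sub_pos.2 (pow_lt_one₀ hq0.le hq1 (by omega))).ne'
    have hzpow : q ^ (2 * ((k + 1 : ℕ) : ℤ)) = q ^ (2 * (k + 1)) := by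
      rw [← zpow_natCast]; norm_cast
    rw [show ((k + 1 : ℕ) : ℤ) - 1 = (k : ℕ) by push_cast; ring, invNomePochhammer_natCast,
      invNomePochhammer_natCast, nomePochhammer_succ, hzpow]
    field_simp

lemma tripleCoeff_zero_right (q : ℝ) (N : ℕ) : tripleCoeff q N 0 =
    nomePochhammer q (2 * N) * invNomePochhammer q N * invNomePochhammer q N := by
  simp [tripleCoeff]

lemma tripleCoeff_zero_right_pos (hq0 : 0 < q) (hq1 : q < 1) (N : ℕ) : 0 < tripleCoeff q N 0 := by
  rw [tripleCoeff_zero_right]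
  have := nomePochhammer_pos hq0 hq1 (2 * N)
  have := invNomePochhammer_pos hq0 hq1 N
  positivity

lemma tripleCoeff_nonneg (hq0 : 0 < q) (hq1 : q < 1) (N : ℕ) (k : ℤ) : 0 ≤ tripleCoeff q N k := by
  have := nomePochhammer_pos hq0 hq1 (2 * N)
  have := invNomePochhammer_nonneg hq0 hq1 ((N : ℤ) - k)
  have := invNomePochhammer_nonneg hq0 hq1 ((N : ℤ) + k)
  unfold tripleCoeff
  positivity

lemma tripleCoeff_zero_left (q : ℝ) (k : ℤ) : tripleCoeff q 0 k = if k = 0 then 1 else 0 := by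
  rcases lt_trichotomy k 0 with hk | rfl | hk
  · simp [tripleCoeff, invNomePochhammer_of_neg hk, hk.ne]
  · simp [tripleCoeff, invNomePochhammer, nomePochhammer]
  · simp [tripleCoeff, invNomePochhammer_of_neg (neg_lt_zero.2 hk), hk.ne']

/-- Pascal's rule: multiplying by the `N`-th factor
`1 + q^{2(2N+1)} + q^{2N+1} (z + z⁻¹)` of the product. -/
lemma tripleCoeff_succ (hq0 : 0 < q) (hq1 : q < 1) (N : ℕ) (k : ℤ) :
    tripleCoeff q (N + 1) k = (1 + q ^ (2 * (2 * N + 1))) * tripleCoeff q N k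
      + q ^ (2 * N + 1) * (tripleCoeff q N (k - 1) + tripleCoeff q N (k + 1)) := by
  have hq : q ≠ 0 := hq0.ne'
  have recLow := invNomePochhammer_sub_one hq0 hq1 (N - k)
  have recLow' := invNomePochhammer_sub_one hq0 hq1 (N + 1 - k)
  have recUp := invNomePochhammer_sub_one hq0 hq1 (N + k)
  have recUp' := invNomePochhammer_sub_one hq0 hq1 (N + 1 + k)
  rw [show (N : ℤ) + 1 - k - 1 = N - k by ring] at recLow'
  rw [show (N : ℤ) + 1 + k - 1 = N + k by ring] at recUp'
  simp only [tripleCoeff, show 2 * (N + 1) = 2 * N + 1 + 1 by ring, nomePochhammer_succ]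
  push_cast
  rw [show (N : ℤ) - (k - 1) = N + 1 - k by ring, show (N : ℤ) + (k - 1) = N + k - 1 by ring,
    show (N : ℤ) - (k + 1) = N - k - 1 by ring, show (N : ℤ) + (k + 1) = N + 1 + k by ring,
    recLow, recUp, recLow', recUp']
  have powSub (n : ℤ) : q ^ (2 * (n - k)) = (q ^ n) ^ 2 * ((q ^ k) ^ 2)⁻¹ := by
    rw [mul_sub, zpow_sub₀ hq, zpow_mul', zpow_mul', zpow_ofNat, zpow_ofNat, div_eq_mul_inv]
  have powAdd (n : ℤ) : q ^ (2 * (n + k)) = (q ^ n) ^ 2 * (q ^ k) ^ 2 := by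
    rw [mul_add, zpow_add₀ hq, zpow_mul', zpow_mul', zpow_ofNat, zpow_ofNat]
  have sqPred : q ^ ((k - 1) ^ 2) = q ^ (k ^ 2) * ((q ^ k) ^ 2)⁻¹ * q := by
    rw [show (k - 1) ^ 2 = k ^ 2 - 2 * k + 1 by ring, zpow_add_one₀ hq, zpow_sub₀ hq, zpow_mul',
      zpow_ofNat, div_eq_mul_inv]
  have sqSucc : q ^ ((k + 1) ^ 2) = q ^ (k ^ 2) * (q ^ k) ^ 2 * q := by
    rw [show (k + 1) ^ 2 = k ^ 2 + 2 * k + 1 by ring, zpow_add_one₀ hq, zpow_add₀ hq, zpow_mul',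
      zpow_ofNat]
  rw [powSub, powSub, powAdd, powAdd, sqPred, sqSucc, zpow_add_one₀ hq, zpow_natCast]
  have hqk : q ^ k ≠ 0 := zpow_ne_zero _ hq
  generalize q ^ k = y at *
  field_simp
  ring

theorem hasSum_tripleCoeff (hq0 : 0 < q) (hq1 : q < 1) {z : ℂ} (hz : z ≠ 0) (N : ℕ) :
    HasSum (fun k : ℤ => (tripleCoeff q N k : ℂ) * z ^ k)
      (∏ j ∈ Finset.range N,
        (1 + z * (q : ℂ) ^ (2 * j + 1)) * (1 + z⁻¹ * (q : ℂ) ^ (2 * j + 1))) := by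
  induction N with
  | zero =>
    have hsingle : (fun k : ℤ => (tripleCoeff q 0 k : ℂ) * z ^ k) =
        fun k => if k = 0 then 1 else 0 := by
      funext k
      by_cases hk : k = 0 <;> simp [tripleCoeff_zero_left, hk]
    rw [hsingle]
    simpa using hasSum_ite_eq (0 : ℤ) (1 : ℂ)
  | succ N ih =>
    rw [Finset.prod_range_succ]
    set P := ∏ j ∈ Finset.range N,
      (1 + z * (q : ℂ) ^ (2 * j + 1)) * (1 + z⁻¹ * (q : ℂ) ^ (2 * j + 1))
    have shiftUp : HasSum (fun k : ℤ => (tripleCoeff q N (k - 1) : ℂ) * z ^ k) (z * P) := by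
      refine ((Equiv.subRight (1 : ℤ)).hasSum_iff.2 (ih.mul_left z)).congr_fun fun k => ?_
      simp only [comp_apply, Equiv.subRight_apply, zpow_sub_one₀ hz]
      field_simp
    have shiftDown : HasSum (fun k : ℤ => (tripleCoeff q N (k + 1) : ℂ) * z ^ k) (z⁻¹ * P) := by
      refine ((Equiv.addRight (1 : ℤ)).hasSum_iff.2 (ih.mul_left z⁻¹)).congr_fun fun k => ?_
      simp only [comp_apply, Equiv.coe_addRight, zpow_add_one₀ hz]
      field_simp
    have hprod : P * ((1 + z * (q : ℂ) ^ (2 * N + 1)) * (1 + z⁻¹ * (q : ℂ) ^ (2 * N + 1))) =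
        (1 + (q : ℂ) ^ (2 * (2 * N + 1))) * P + (q : ℂ) ^ (2 * N + 1) * (z * P + z⁻¹ * P) := by
      linear_combination P * (q : ℂ) ^ (2 * (2 * N + 1)) * mul_inv_cancel₀ hz
    rw [hprod]
    refine ((ih.mul_left _).add ((shiftUp.add shiftDown).mul_left _)).congr_fun fun k => ?_
    rw [tripleCoeff_succ hq0 hq1]
    push_cast
    ring

lemma invNomePochhammer_sub_mul_add_le (hq0 : 0 < q) (hq1 : q < 1) (N : ℕ) (k : ℤ) :
    invNomePochhammer q (N - k) * invNomePochhammer q (N + k) ≤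
      invNomePochhammer q N * invNomePochhammer q N := by
  have key (n : ℕ) : invNomePochhammer q (N - n) * invNomePochhammer q (N + n) ≤
      invNomePochhammer q N * invNomePochhammer q N := by
    induction n with
    | zero => simp
    | succ n ih =>
      refine le_trans ?_ ih
      have recLow := invNomePochhammer_sub_one hq0 hq1 (N - n)
      have recUp := invNomePochhammer_sub_one hq0 hq1 (N + n + 1)
      rw [add_sub_cancel_right] at recUp
      push_cast
      rw [← sub_sub, ← add_assoc, recLow, recUp]
      have hpow : q ^ (2 * ((N : ℤ) + n + 1)) ≤ q ^ (2 * ((N : ℤ) - n)) :=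
        zpow_le_zpow_right_of_le_one₀ hq0 hq1.le (by omega)
      have := mul_nonneg (invNomePochhammer_nonneg hq0 hq1 (N - n))
        (invNomePochhammer_nonneg hq0 hq1 (N + n + 1))
      nlinarith
  obtain ⟨n, rfl | rfl⟩ := k.eq_nat_or_neg
  · exact key n
  · rw [sub_neg_eq_add, ← sub_eq_add_neg, mul_comm]
    exact key n

lemma tripleCoeff_le (hq0 : 0 < q) (hq1 : q < 1) (N : ℕ) (k : ℤ) :
    tripleCoeff q N k ≤ tripleCoeff q N 0 * q ^ (k ^ 2) := by
  have hpos := mul_pos (nomePochhammer_pos hq0 hq1 (2 * N)) (zpow_pos hq0 (k ^ 2))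
  calc tripleCoeff q N k
      = nomePochhammer q (2 * N) * q ^ (k ^ 2) *
          (invNomePochhammer q (N - k) * invNomePochhammer q (N + k)) := mul_assoc _ _ _
    _ ≤ nomePochhammer q (2 * N) * q ^ (k ^ 2) * (invNomePochhammer q N * invNomePochhammer q N) :=
        mul_le_mul_of_nonneg_left (invNomePochhammer_sub_mul_add_le hq0 hq1 N k) hpos.le
    _ = tripleCoeff q N 0 * q ^ (k ^ 2) := by rw [tripleCoeff_zero_right]; ring

lemma tendsto_one_sub_zpow_add (hq0 : 0 < q) (hq1 : q < 1) (k : ℤ) :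
    Tendsto (fun N : ℕ => 1 - q ^ (2 * ((N : ℤ) + k))) atTop (𝓝 1) := by
  have hlim : Tendsto (fun N : ℕ => 1 - q ^ (2 * k) * (q ^ 2) ^ N) atTop
      (𝓝 (1 - q ^ (2 * k) * 0)) :=
    ((tendsto_pow_atTop_nhds_zero_of_lt_one (by positivity) (by nlinarith)).const_mul _).const_sub _
  rw [mul_zero, sub_zero] at hlim
  refine hlim.congr fun N => ?_
  rw [mul_add, zpow_add₀ hq0.ne', ← pow_mul, mul_comm (q ^ (2 * k)), ← zpow_natCast]
  push_cast
  rfl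

lemma tendsto_invNomePochhammer_add_div (hq0 : 0 < q) (hq1 : q < 1) (k : ℤ) :
    Tendsto (fun N : ℕ => invNomePochhammer q (N + k) / invNomePochhammer q N) atTop (𝓝 1) := by
  induction k using Int.induction_on with
  | zero =>
    refine tendsto_const_nhds.congr fun N => ?_
    rw [add_zero, div_self (invNomePochhammer_pos hq0 hq1 N).ne']
  | succ k ih =>
    have h := ih.div (tendsto_one_sub_zpow_add hq0 hq1 (k + 1)) one_ne_zero
    rw [div_one] at h
    refine h.congr fun N => ?_
    have hne : 1 - q ^ (2 * ((N : ℤ) + (k + 1))) ≠ 0 :=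
      (sub_pos.2 (zpow_lt_one₀ hq0 hq1 (by omega))).ne'
    have hrec := invNomePochhammer_sub_one hq0 hq1 (N + (k + 1))
    rw [← add_assoc, add_sub_cancel_right] at hrec
    rw [← add_assoc] at hne
    simp only [Pi.div_apply, ← add_assoc, hrec]
    field_simp
  | pred k ih =>
    have h := ih.mul (tendsto_one_sub_zpow_add hq0 hq1 (-k))
    rw [mul_one] at h
    refine h.congr fun N => ?_
    rw [← add_sub_assoc, invNomePochhammer_sub_one hq0 hq1]
    ring

lemma tendsto_tripleCoeff_div (hq0 : 0 < q) (hq1 : q < 1) (k : ℤ) :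
    Tendsto (fun N : ℕ => tripleCoeff q N k / tripleCoeff q N 0) atTop (𝓝 (q ^ (k ^ 2))) := by
  have hlim := ((tendsto_invNomePochhammer_add_div hq0 hq1 (-k)).const_mul (q ^ (k ^ 2))).mul
    (tendsto_invNomePochhammer_add_div hq0 hq1 k)
  rw [mul_one, mul_one] at hlim
  refine hlim.congr fun N => ?_
  have := (invNomePochhammer_pos hq0 hq1 N).ne'
  have := (nomePochhammer_pos hq0 hq1 (2 * N)).ne'
  rw [tripleCoeff_zero_right, tripleCoeff, ← sub_eq_add_neg]
  field_simp

theorem tendsto_tripleProduct (hq0 : 0 < q) (hq1 : q < 1) (hsum : Summable fun k : ℤ => q ^ (k ^ 2))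
    {z : ℂ} (hz : ‖z‖ = 1) :
    Tendsto (fun N : ℕ => ((tripleCoeff q N 0 : ℝ) : ℂ)⁻¹ * ∏ j ∈ Finset.range N,
      (1 + z * (q : ℂ) ^ (2 * j + 1)) * (1 + z⁻¹ * (q : ℂ) ^ (2 * j + 1))) atTop
      (𝓝 (∑' k : ℤ, ((q ^ (k ^ 2) : ℝ) : ℂ) * z ^ k)) := by
  have hz0 : z ≠ 0 := by rintro rfl; simp at hz
  have hlim := tendsto_tsum_of_dominated_convergence (𝓕 := atTop)
    (f := fun (N : ℕ) (k : ℤ) => ((tripleCoeff q N k / tripleCoeff q N 0 : ℝ) : ℂ) * z ^ k) hsum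
    (fun k => ((Complex.continuous_ofReal.tendsto _).comp
      (tendsto_tripleCoeff_div hq0 hq1 k)).mul_const _)
    (Eventually.of_forall fun N k => by
      have hpos := tripleCoeff_zero_right_pos hq0 hq1 N
      rw [norm_mul, norm_zpow, hz, one_zpow, mul_one, Complex.norm_real,
        norm_of_nonneg (div_nonneg (tripleCoeff_nonneg hq0 hq1 N k) hpos.le), div_le_iff₀' hpos]
      exact tripleCoeff_le hq0 hq1 N k)
  refine hlim.congr fun N => ?_
  rw [← (hasSum_tripleCoeff hq0 hq1 hz0 N).tsum_eq, ← tsum_mul_left]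
  refine tsum_congr fun k => ?_
  push_cast
  ring

end TripleProduct

section ThetaMonotone

lemma tripleFactor_exp_mul_I (q x : ℝ) :
    (1 + Complex.exp (x * Complex.I) * q) * (1 + (Complex.exp (x * Complex.I))⁻¹ * q) =
      ((1 + 2 * cos x * q + q ^ 2 : ℝ) : ℂ) := by
  have hinv : Complex.exp (x * Complex.I) * (Complex.exp (x * Complex.I))⁻¹ = 1 :=
    mul_inv_cancel₀ (Complex.exp_ne_zero _)
  have hcos : 2 * Complex.cos x =
      Complex.exp (x * Complex.I) + (Complex.exp (x * Complex.I))⁻¹ := by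
    rw [Complex.two_cos, ← Complex.exp_neg, neg_mul]
  push_cast
  rw [hcos]
  linear_combination (q : ℂ) ^ 2 * hinv

lemma tripleFactor_pos (x : ℝ) {q : ℝ} (hq0 : 0 < q) (hq1 : q < 1) :
    0 < 1 + 2 * cos x * q + q ^ 2 := by
  nlinarith [neg_one_le_cos x, sq_nonneg (1 - q)]

lemma exp_neg_pi_mul_sq (k : ℤ) (t : ℝ) : rexp (-π * k ^ 2 * t) = rexp (-π * t) ^ (k ^ 2) := by
  rw [← Real.rpow_intCast, ← Real.exp_mul]
  push_cast
  ring_nf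

lemma tendsto_tripleProduct_cosKernel {t : ℝ} (ht : 0 < t) (x : ℝ) :
    Tendsto (fun N : ℕ => (tripleCoeff (rexp (-π * t)) N 0)⁻¹ * ∏ j ∈ Finset.range N,
      (1 + 2 * cos (2 * π * x) * rexp (-π * t) ^ (2 * j + 1) + (rexp (-π * t) ^ (2 * j + 1)) ^ 2))
      atTop (𝓝 (cosKernel x t)) := by
  have hq1 : rexp (-π * t) < 1 := exp_lt_one_iff.2 (by nlinarith [mul_pos pi_pos ht])
  have hsum : Summable fun k : ℤ => rexp (-π * t) ^ (k ^ 2) := by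
    refine (hasSum_int_evenKernel 0 ht).summable.congr fun k => ?_
    rw [add_zero, exp_neg_pi_mul_sq]
  have hlim := tendsto_tripleProduct (exp_pos _) hq1 hsum
    (Complex.norm_exp_ofReal_mul_I (2 * π * x))
  have hseries : ∑' k : ℤ, ((rexp (-π * t) ^ (k ^ 2) : ℝ) : ℂ) *
      Complex.exp ((2 * π * x : ℝ) * Complex.I) ^ k = cosKernel x t := by
    rw [← (hasSum_int_cosKernel x ht).tsum_eq]
    refine tsum_congr fun k => ?_
    rw [exp_neg_pi_mul_sq, ← Complex.exp_int_mul, mul_comm]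
    congr 2
    push_cast
    ring
  rw [hseries] at hlim
  simp only [← Complex.ofReal_pow, tripleFactor_exp_mul_I] at hlim
  norm_cast at hlim
  exact tendsto_ofReal_iff.1 hlim

lemma evenKernel_pos (x : ℝ) {t : ℝ} (ht : 0 < t) : 0 < evenKernel x t := by
  rw [← (hasSum_int_evenKernel x ht).tsum_eq]
  exact (hasSum_int_evenKernel x ht).summable.tsum_pos (fun _ => (exp_pos _).le) 0 (exp_pos _)

lemma cosKernel_pos (x : ℝ) {t : ℝ} (ht : 0 < t) : 0 < cosKernel x t := by
  have h := evenKernel_pos x (one_div_pos.2 ht)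
  rw [evenKernel_functional_equation, one_div_one_div] at h
  exact (pos_iff_pos_of_mul_pos h).1 (by positivity)

/-- Every factor of the triple product increases with `cos`; the first one is split off so that
strictness survives the limit. -/
theorem cosKernel_lt_cosKernel {t : ℝ} (ht : 0 < t) {x y : ℝ}
    (hxy : cos (2 * π * y) < cos (2 * π * x)) : cosKernel y t < cosKernel x t := by
  have limX := tendsto_tripleProduct_cosKernel ht x
  have limY := tendsto_tripleProduct_cosKernel ht y
  have hq0 : 0 < rexp (-π * t) := exp_pos _
  have hq1 : rexp (-π * t) < 1 := exp_lt_one_iff.2 (by nlinarith [mul_pos pi_pos ht])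
  have hY := cosKernel_pos y ht
  set q := rexp (-π * t)
  set cx := cos (2 * π * x)
  set cy := cos (2 * π * y)
  have hfx : 0 < 1 + 2 * cx * q + q ^ 2 := tripleFactor_pos _ hq0 hq1
  have hfy : 0 < 1 + 2 * cy * q + q ^ 2 := tripleFactor_pos _ hq0 hq1
  have hle : cosKernel y t / (1 + 2 * cy * q + q ^ 2) ≤
      cosKernel x t / (1 + 2 * cx * q + q ^ 2) := by
    refine le_of_tendsto_of_tendsto (limY.div_const _) (limX.div_const _) ?_
    filter_upwards [eventually_ge_atTop 1] with N hN
    obtain ⟨M, rfl⟩ := Nat.exists_eq_add_of_le' hN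
    simp only [Finset.prod_range_succ', mul_zero, zero_add, pow_one]
    rw [← mul_assoc, ← mul_assoc, mul_div_cancel_right₀ _ hfx.ne', mul_div_cancel_right₀ _ hfy.ne']
    refine mul_le_mul_of_nonneg_left (Finset.prod_le_prod (fun j _ => ?_) (fun j _ => ?_))
      (inv_pos.2 (tripleCoeff_zero_right_pos hq0 hq1 _)).le
    · exact (tripleFactor_pos _ (by positivity) (pow_lt_one₀ hq0.le hq1 (by omega))).le
    · gcongr
  have hlt : 1 + 2 * cy * q + q ^ 2 < 1 + 2 * cx * q + q ^ 2 := by gcongr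
  calc cosKernel y t
      < cosKernel y t / (1 + 2 * cy * q + q ^ 2) * (1 + 2 * cx * q + q ^ 2) := by
        rw [div_mul_eq_mul_div, lt_div_iff₀ hfy]
        exact mul_lt_mul_of_pos_left hlt hY
    _ ≤ cosKernel x t := (le_div_iff₀ hfx).1 hle

theorem evenKernel_lt_evenKernel {t : ℝ} (ht : 0 < t) {x y : ℝ}
    (hxy : cos (2 * π * y) < cos (2 * π * x)) : evenKernel y t < evenKernel x t := by
  rw [evenKernel_functional_equation, evenKernel_functional_equation]
  exact mul_lt_mul_of_pos_left (cosKernel_lt_cosKernel (one_div_pos.2 ht) hxy) (by positivity)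

end ThetaMonotone

local notation "𝕋" => AddCircle (2 * π)

local instance : Fact (0 < 2 * π) := ⟨two_pi_pos⟩

section CircleNorm

lemma cos_norm_coe (x : ℝ) : cos ‖(x : 𝕋)‖ = cos x := by
  rw [AddCircle.norm_eq, cos_abs, cos_sub_int_mul_two_pi]

lemma norm_le_pi (θ : 𝕋) : ‖θ‖ ≤ π := by
  have h := AddCircle.norm_le_half_period (2 * π) (x := θ) two_pi_pos.ne'
  rwa [abs_of_pos two_pi_pos, mul_div_cancel_left₀ _ two_ne_zero] at h

lemma norm_mem_Icc (θ : 𝕋) : ‖θ‖ ∈ Icc 0 π := ⟨norm_nonneg θ, norm_le_pi θ⟩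

lemma cos_lt_cos_iff_norm_coe_lt {x y : ℝ} : cos y < cos x ↔ ‖(x : 𝕋)‖ < ‖(y : 𝕋)‖ := by
  rw [← cos_norm_coe x, ← cos_norm_coe y]
  exact strictAntiOn_cos.lt_iff_gt (norm_mem_Icc _) (norm_mem_Icc _)

lemma cos_eq_cos_iff_norm_coe_eq {x y : ℝ} : cos x = cos y ↔ ‖(x : 𝕋)‖ = ‖(y : 𝕋)‖ := by
  rw [← cos_norm_coe x, ← cos_norm_coe y]
  exact injOn_cos.eq_iff (norm_mem_Icc _) (norm_mem_Icc _)

lemma cos_sub_cos_reflect_mul (c x y : ℝ) :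
    (cos x - cos (c - x)) * (cos y - cos (c - y)) =
      (1 - cos c) * (cos (x - y) - cos (x - (c - y))) := by
  simp only [cos_sub, sin_sub]
  linear_combination sin x * sin y * sin_sq_add_cos_sq c

theorem norm_sub_lt_norm_sub_reflect {c x y : 𝕋} (hx : ‖x‖ < ‖c - x‖) (hy : ‖y‖ < ‖c - y‖) :
    ‖x - y‖ < ‖x - (c - y)‖ := by
  induction c using QuotientAddGroup.induction_on with | _ c
  induction x using QuotientAddGroup.induction_on with | _ x
  induction y using QuotientAddGroup.induction_on with | _ y
  simp only [← AddCircle.coe_sub, ← cos_lt_cos_iff_norm_coe_lt] at hx hy ⊢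
  have hprod := mul_pos (sub_pos.2 hx) (sub_pos.2 hy)
  rw [cos_sub_cos_reflect_mul] at hprod
  exact sub_pos.1 (pos_of_mul_pos_right hprod (sub_nonneg.2 (cos_le_one c)))

theorem norm_sub_eq_norm_sub_reflect {c x : 𝕋} (hc : c ≠ 0) (hx : ‖x‖ = ‖c - x‖) (y : 𝕋) :
    ‖x - y‖ = ‖x - (c - y)‖ := by
  induction c using QuotientAddGroup.induction_on with | _ c
  induction x using QuotientAddGroup.induction_on with | _ x
  induction y using QuotientAddGroup.induction_on with | _ y
  have hcos : 1 - cos c ≠ 0 := fun h => hc <| by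
    rw [sub_eq_zero, ← cos_zero, cos_eq_cos_iff_norm_coe_eq, AddCircle.coe_zero, norm_zero] at h
    exact norm_eq_zero.1 h.symm
  simp only [← AddCircle.coe_sub, ← cos_eq_cos_iff_norm_coe_eq] at hx ⊢
  have hprod := cos_sub_cos_reflect_mul c x y
  rw [sub_eq_zero.2 hx, zero_mul] at hprod
  exact sub_eq_zero.1 ((mul_eq_zero.1 hprod.symm).resolve_left hcos)

lemma norm_reflect_sub_reflect (c x y : 𝕋) : ‖(c - x) - (c - y)‖ = ‖x - y‖ := by
  rw [sub_sub_sub_cancel_left, norm_sub_rev]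

lemma norm_reflect_sub (c x y : 𝕋) : ‖(c - x) - y‖ = ‖x - (c - y)‖ := by
  rw [← norm_neg]
  congr 1
  abel

lemma volume_norm_lt (r : ℝ) : volume {θ : 𝕋 | ‖θ‖ < r} = ENNReal.ofReal (min (2 * π) (2 * r)) := by
  have hball : {θ : 𝕋 | ‖θ‖ < r} = Metric.ball 0 r := by ext; simp
  rw [hball, ← AddCircle.volume_closedBall (x := (0 : 𝕋))]
  exact (measure_congr AddCircle.closedBall_ae_eq_ball).symm

lemma ae_ne_zero_and_norm_lt_pi : ∀ᵐ θ : 𝕋, θ ≠ 0 ∧ ‖θ‖ < π := by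
  have hzero : ∀ᵐ θ : 𝕋, θ ≠ 0 := by
    have h := AddCircle.volume_closedBall (2 * π) (x := (0 : 𝕋)) 0
    rw [ae_iff]
    simpa [pi_pos.le] using h
  have hpi : ∀ᵐ θ : 𝕋, ‖θ‖ < π := by
    have h := volume_norm_lt π
    rw [min_self, ← AddCircle.measure_univ (2 * π)] at h
    exact (ae_iff_measure_eq
      (measurableSet_lt measurable_norm measurable_const).nullMeasurableSet).2 h
  exact hzero.and hpi

end CircleNorm

section PeriodizedRiesz

/-- The Riesz kernel `(x² + r²)^{-q/2}`, summed over the translates of `x` by `2πℤ`. -/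
noncomputable def periodizedRiesz (q r x : ℝ) : ℝ≥0∞ :=
  ∑' k : ℤ, ENNReal.ofReal ((x + 2 * π * k) ^ 2 + r ^ 2) ^ (-(q / 2))

lemma periodizedRiesz_periodic (q r : ℝ) : Periodic (periodizedRiesz q r) (2 * π) := by
  intro x
  simp only [periodizedRiesz]
  rw [← (Equiv.addRight (1 : ℤ)).tsum_eq fun k : ℤ =>
    ENNReal.ofReal ((x + 2 * π * k) ^ 2 + r ^ 2) ^ (-(q / 2))]
  refine tsum_congr fun k => ?_
  simp only [Equiv.coe_addRight]
  push_cast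
  ring_nf

lemma periodizedRiesz_neg (q r x : ℝ) : periodizedRiesz q r (-x) = periodizedRiesz q r x := by
  simp only [periodizedRiesz]
  rw [← (Equiv.neg ℤ).tsum_eq fun k : ℤ =>
    ENNReal.ofReal ((x + 2 * π * k) ^ 2 + r ^ 2) ^ (-(q / 2))]
  refine tsum_congr fun k => ?_
  simp only [Equiv.neg_apply]
  push_cast
  ring_nf

lemma periodizedRiesz_norm_coe (q r x : ℝ) :
    periodizedRiesz q r ‖(x : 𝕋)‖ = periodizedRiesz q r x := by
  rw [AddCircle.norm_eq]
  have hper := (periodizedRiesz_periodic q r).sub_int_mul_eq (x := x) (round ((2 * π)⁻¹ * x))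
  rcases abs_choice (x - round ((2 * π)⁻¹ * x) * (2 * π)) with h | h <;> rw [h]
  · exact hper
  · rw [periodizedRiesz_neg, hper]

lemma measurable_periodizedRiesz (q : ℝ) :
    Measurable fun z : ℝ × ℝ => periodizedRiesz q z.1 z.2 := by
  unfold periodizedRiesz
  fun_prop

lemma periodizedRiesz_pos {q : ℝ} (hq : 0 < q) (r x : ℝ) : 0 < periodizedRiesz q r x := by
  refine pos_iff_ne_zero.2 fun h => ?_
  have hterm := ENNReal.tsum_eq_zero.1 h 0
  rcases ENNReal.rpow_eq_zero_iff.1 hterm with ⟨-, h⟩ | ⟨h, -⟩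
  · linarith
  · exact ENNReal.ofReal_ne_top h

lemma periodizedRiesz_ne_top {q : ℝ} (hq : 1 < q) (r : ℝ) {x : ℝ}
    (hx : ∀ k : ℤ, x + 2 * π * k ≠ 0) :
    periodizedRiesz q r x ≠ ⊤ := by
  have := pi_pos
  have hsum : Summable fun k : ℤ => (2 * π) ^ (-q) * (1 / |(k : ℝ) + x / (2 * π)| ^ q) :=
    ((summable_one_div_int_add_rpow (x / (2 * π)) q).2 hq).mul_left _
  refine ne_top_of_le_ne_top hsum.tsum_ofReal_ne_top (ENNReal.tsum_le_tsum fun k => ?_)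
  have hk := hx k
  have hterm : (2 * π) ^ (-q) * (1 / |(k : ℝ) + x / (2 * π)| ^ q) =
      ((x + 2 * π * k) ^ 2) ^ (-(q / 2)) := by
    rw [← sq_abs, ← rpow_natCast, ← rpow_mul (abs_nonneg _),
      show x + 2 * π * k = (2 * π) * (k + x / (2 * π)) by field_simp; ring, abs_mul,
      mul_rpow (abs_nonneg _) (abs_nonneg _), abs_of_pos two_pi_pos, one_div,
      ← rpow_neg (abs_nonneg _)]
    congr 2 <;> push_cast <;> ring
  rw [ENNReal.ofReal_rpow_of_pos (by positivity), hterm]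
  exact ENNReal.ofReal_le_ofReal
    (rpow_le_rpow_of_nonpos (by positivity) (by nlinarith) (by linarith))

lemma ofReal_rpow_neg_mul_Gamma {α w : ℝ} (hα : 0 < α) (hw : 0 < w) :
    ENNReal.ofReal w ^ (-α) * ENNReal.ofReal (Gamma α) =
      ∫⁻ l in Ioi (0 : ℝ), ENNReal.ofReal (l ^ (α - 1) * rexp (-(w * l))) := by
  have hint := integral_rpow_mul_exp_neg_mul_Ioi hα hw
  have := Gamma_pos_of_pos hα
  rw [← ofReal_integral_eq_lintegral_ofReal, hint, ENNReal.ofReal_rpow_of_pos hw,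
    ← ENNReal.ofReal_mul (by positivity), one_div, inv_rpow hw.le, rpow_neg hw.le]
  · refine Integrable.of_integral_ne_zero ?_
    rw [hint]
    positivity
  · filter_upwards [ae_restrict_mem measurableSet_Ioi] with l (hl : 0 < l)
    positivity

/-- Subordination: the periodized kernel is a superposition of periodized Gaussians. -/
theorem periodizedRiesz_mul_Gamma {q r x : ℝ} (hq : 0 < q)
    (hx : ∀ k : ℤ, 0 < (x + 2 * π * k) ^ 2 + r ^ 2) :
    periodizedRiesz q r x * ENNReal.ofReal (Gamma (q / 2)) =
      ∫⁻ l in Ioi (0 : ℝ), ENNReal.ofReal (l ^ (q / 2 - 1) * rexp (-(r ^ 2 * l)) *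
        evenKernel (x / (2 * π) : ℝ) (4 * π * l)) := by
  rw [periodizedRiesz, ← ENNReal.tsum_mul_right]
  simp_rw [fun k => ofReal_rpow_neg_mul_Gamma (half_pos hq) (hx k)]
  rw [← lintegral_tsum fun k => by fun_prop]
  refine setLIntegral_congr_fun measurableSet_Ioi fun l (hl : 0 < l) => ?_
  have hsum := (hasSum_int_evenKernel (x / (2 * π)) (t := 4 * π * l) (by positivity)).mul_left
    (l ^ (q / 2 - 1) * rexp (-(r ^ 2 * l)))
  rw [← hsum.tsum_eq, ENNReal.ofReal_tsum_of_nonneg (fun n => by positivity) hsum.summable]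
  refine tsum_congr fun k => ?_
  rw [mul_assoc (l ^ (q / 2 - 1)), ← Real.exp_add]
  congr 3
  field_simp
  ring

lemma aemeasurable_ofReal_mul_evenKernel (f : ℝ → ℝ) (hf : Measurable f) (x : ℝ) :
    AEMeasurable (fun l => ENNReal.ofReal (f l * evenKernel x (4 * π * l)))
      (volume.restrict (Ioi 0)) := by
  refine ENNReal.measurable_ofReal.comp_aemeasurable (hf.aemeasurable.mul ?_)
  refine ContinuousOn.aemeasurable ?_ measurableSet_Ioi
  exact (continuousOn_evenKernel x).comp (by fun_prop) fun l (hl : 0 < l) =>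
    mem_Ioi.2 (by positivity)

theorem periodizedRiesz_lt_periodizedRiesz {q r x y : ℝ} (hq : 1 < q) (hxy : cos y < cos x) :
    periodizedRiesz q r y < periodizedRiesz q r x := by
  have := pi_pos
  have hy (k : ℤ) : y + 2 * π * k ≠ 0 := fun hk => by
    have hcos : cos y = 1 := by
      rw [show y = 0 - k * (2 * π) by linarith, cos_sub_int_mul_two_pi, cos_zero]
    linarith [cos_le_one x]
  have hfin := periodizedRiesz_ne_top hq r hy
  by_cases hx : ∀ k : ℤ, 0 < (x + 2 * π * k) ^ 2 + r ^ 2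
  · have hyr (k : ℤ) : 0 < (y + 2 * π * k) ^ 2 + r ^ 2 := by
      have := hy k
      positivity
    have hΓ : ENNReal.ofReal (Gamma (q / 2)) ≠ 0 := by
      simpa using Gamma_pos_of_pos (by linarith : 0 < q / 2)
    have hfinΓ := ENNReal.mul_ne_top hfin (ENNReal.ofReal_ne_top (r := Gamma (q / 2)))
    refine (ENNReal.mul_lt_mul_iff_left hΓ ENNReal.ofReal_ne_top).1 ?_
    rw [periodizedRiesz_mul_Gamma (by linarith) hyr] at hfinΓ ⊢
    rw [periodizedRiesz_mul_Gamma (by linarith) hx]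
    refine lintegral_strict_mono (by simp [Measure.restrict_eq_zero])
      (aemeasurable_ofReal_mul_evenKernel _ (by fun_prop) _) hfinΓ ?_
    filter_upwards [ae_restrict_mem measurableSet_Ioi] with l (hl : 0 < l)
    have hkernel : evenKernel (y / (2 * π) : ℝ) (4 * π * l) <
        evenKernel (x / (2 * π) : ℝ) (4 * π * l) := by
      refine evenKernel_lt_evenKernel (by positivity) ?_
      rwa [mul_div_cancel₀ _ two_pi_pos.ne', mul_div_cancel₀ _ two_pi_pos.ne']
    have hpos := evenKernel_pos (y / (2 * π)) (t := 4 * π * l) (by positivity)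
    exact (ENNReal.ofReal_lt_ofReal_iff_of_nonneg (by positivity)).2 (by gcongr)
  · push Not at hx
    obtain ⟨k, hk⟩ := hx
    have htop : periodizedRiesz q r x = ⊤ := by
      refine ENNReal.tsum_eq_top_of_eq_top ⟨k, ?_⟩
      rw [ENNReal.ofReal_of_nonpos hk, ENNReal.zero_rpow_of_neg (by linarith)]
    rw [htop]
    exact hfin.lt_top

end PeriodizedRiesz

section ConvexPotential

/-- An even strictly convex function, used to measure the difference of two values of a function;
the model case is `t ↦ |t| ^ p` with `1 < p`. -/
structure ConvexPotential where
  /-- The underlying function. -/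
  toFun : ℝ → ℝ
  strictConvexOn : StrictConvexOn ℝ univ toFun
  even : ∀ t, toFun (-t) = toFun t
  map_zero_nonneg : 0 ≤ toFun 0

namespace ConvexPotential

instance : CoeFun ConvexPotential fun _ => ℝ → ℝ := ⟨toFun⟩

variable (φ : ConvexPotential) {a a' b b' x y : ℝ}

lemma map_abs (x : ℝ) : φ |x| = φ x := by
  rcases abs_choice x with h | h <;> simp only [h, φ.even]

lemma lt_of_abs_lt (h : |x| < |y|) : φ x < φ y := by
  have hx : x ∈ openSegment ℝ (-|y|) |y| := by
    rw [openSegment_eq_Ioo (by linarith [abs_nonneg x])]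
    exact abs_lt.1 h
  have := φ.strictConvexOn.lt_on_openSegment (mem_univ _) (mem_univ _)
    (by linarith [abs_nonneg x] : -|y| < |y|).ne hx
  rwa [φ.even, max_self, map_abs] at this

lemma le_of_abs_le (h : |x| ≤ |y|) : φ x ≤ φ y := by
  rcases h.lt_or_eq with h | h
  · exact (φ.lt_of_abs_lt h).le
  · rw [← φ.map_abs x, h, φ.map_abs]

lemma nonneg (x : ℝ) : 0 ≤ φ x :=
  φ.map_zero_nonneg.trans (φ.le_of_abs_le (by rw [abs_zero]; exact abs_nonneg x))

protected lemma continuous : Continuous φ :=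
  continuousOn_univ.1 (φ.strictConvexOn.convexOn.continuousOn isOpen_univ)

lemma four_point (ha : a < a') (hb : b < b') :
    φ (a - b) + φ (a' - b') < φ (a - b') + φ (a' - b) := by
  have hd : 0 < (a' - a) + (b' - b) := by linarith
  set l : ℝ := (a' - a) / ((a' - a) + (b' - b)) with hl
  have hl0 : 0 < l := div_pos (by linarith) hd
  have hl1 : l < 1 := by rw [hl, div_lt_one hd]; linarith
  have hlm : l * ((a' - a) + (b' - b)) = a' - a := div_mul_cancel₀ _ hd.ne'
  have hne : a - b' ≠ a' - b := by linarith
  have h₁ := φ.strictConvexOn.2 (mem_univ _) (mem_univ _) hne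
    (sub_pos.2 hl1) hl0 (sub_add_cancel 1 l)
  have h₂ := φ.strictConvexOn.2 (mem_univ _) (mem_univ _) hne
    hl0 (sub_pos.2 hl1) (add_sub_cancel l 1)
  simp only [smul_eq_mul] at h₁ h₂
  rw [show (1 - l) * (a - b') + l * (a' - b) = a' - b' by linear_combination hlm] at h₁
  rw [show l * (a - b') + (1 - l) * (a' - b) = a - b by linear_combination -hlm] at h₂
  linarith

/-- The cost `φ (a - b)` of the pair of values `(a, b)`. -/
noncomputable def cost (a b : ℝ) : ℝ≥0∞ := ENNReal.ofReal (φ (a - b))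

lemma measurable_cost : Measurable fun z : ℝ × ℝ => φ.cost z.1 z.2 :=
  (φ.continuous.measurable.comp (measurable_fst.sub measurable_snd)).ennreal_ofReal

lemma cost_neg_neg (a b : ℝ) : φ.cost (-a) (-b) = φ.cost a b := by
  rw [cost, cost, ← φ.even]; congr 2; ring

lemma cost_abs_abs_le (a b : ℝ) : φ.cost |a| |b| ≤ φ.cost a b :=
  ENNReal.ofReal_le_ofReal (φ.le_of_abs_le (abs_abs_sub_abs_le a b))

lemma cost_abs_abs_lt (ha : a < 0) (hb : 0 < b) : φ.cost |a| |b| < φ.cost a b := by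
  refine (ENNReal.ofReal_lt_ofReal_iff_of_nonneg (φ.nonneg _)).2 (φ.lt_of_abs_lt ?_)
  rw [abs_of_neg ha, abs_of_pos hb, abs_of_neg (by linarith : a - b < 0), abs_lt]
  constructor <;> linarith

lemma cost_add_cost_lt (ha : a < a') (hb : b < b') :
    φ.cost a b + φ.cost a' b' < φ.cost a b' + φ.cost a' b := by
  simp only [cost, ← ENNReal.ofReal_add (φ.nonneg _) (φ.nonneg _)]
  exact (ENNReal.ofReal_lt_ofReal_iff_of_nonneg (add_nonneg (φ.nonneg _) (φ.nonneg _))).2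
    (φ.four_point ha hb)

lemma cost_add_cost_le (ha : a ≤ a') (hb : b ≤ b') :
    φ.cost a b + φ.cost a' b' ≤ φ.cost a b' + φ.cost a' b := by
  rcases ha.eq_or_lt with rfl | ha
  · rw [add_comm]
  rcases hb.eq_or_lt with rfl | hb
  · rfl
  exact (φ.cost_add_cost_lt ha hb).le

lemma cost_sup_sup_add_cost_inf_inf (a a' b b' : ℝ) :
    φ.cost (a ⊔ a') (b ⊔ b') + φ.cost (a ⊓ a') (b ⊓ b') =
      min (φ.cost a b + φ.cost a' b') (φ.cost a b' + φ.cost a' b) := by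
  rcases le_total a a' with ha | ha <;> rcases le_total b b' with hb | hb <;>
    have h := φ.cost_add_cost_le ha hb <;> simp only [ha, hb, sup_of_le_left, sup_of_le_right,
      inf_of_le_left, inf_of_le_right]
  · rw [min_eq_left h, add_comm]
  · rw [min_eq_right h, add_comm]
  · rw [min_eq_right (by simpa only [add_comm] using h)]
  · rw [min_eq_left (by simpa only [add_comm] using h)]

lemma cost_sup_inf_add_cost_inf_sup (a a' b b' : ℝ) :
    φ.cost (a ⊔ a') (b ⊓ b') + φ.cost (a ⊓ a') (b ⊔ b') =
      max (φ.cost a b + φ.cost a' b') (φ.cost a b' + φ.cost a' b) := by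
  rcases le_total a a' with ha | ha <;> rcases le_total b b' with hb | hb <;>
    have h := φ.cost_add_cost_le ha hb <;> simp only [ha, hb, sup_of_le_left, sup_of_le_right,
      inf_of_le_left, inf_of_le_right]
  · rw [max_eq_right h, add_comm]
  · rw [max_eq_left h, add_comm]
  · rw [max_eq_left (by simpa only [add_comm] using h)]
  · rw [max_eq_right (by simpa only [add_comm] using h)]

end ConvexPotential

end ConvexPotential

section Polarization

variable {W α : Type*}

/-- Reflection of the circle variable. -/
noncomputable def reflect (c : 𝕋) (x : 𝕋 × W) : 𝕋 × W := (c - x.1, x.2)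

/-- Rotation of the circle variable. -/
noncomputable def rotate (a : 𝕋) (x : 𝕋 × W) : 𝕋 × W := (x.1 + a, x.2)

@[simp] lemma reflect_reflect (c : 𝕋) (x : 𝕋 × W) : reflect c (reflect c x) = x := by
  simp only [reflect, sub_sub_cancel]

/-- Two-point rearrangement with respect to the reflection `θ ↦ c - θ` of the circle: of the two
values of `v` at a point and at its mirror image, the larger one is moved to the point whose circle
coordinate is nearer to `0`. On sets it is used with `α = Prop`. -/
noncomputable def polarize [Lattice α] (c : 𝕋) (v : 𝕋 × W → α) (x : 𝕋 × W) : α :=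
  if ‖x.1‖ < ‖c - x.1‖ then v x ⊔ v (reflect c x)
  else if ‖c - x.1‖ < ‖x.1‖ then v x ⊓ v (reflect c x)
  else v x

section Lattice

variable [Lattice α] {c : 𝕋} {x : 𝕋 × W}

lemma polarize_of_near (v : 𝕋 × W → α) (h : ‖x.1‖ < ‖c - x.1‖) :
    polarize c v x = v x ⊔ v (reflect c x) := if_pos h

lemma polarize_of_far (v : 𝕋 × W → α) (h : ‖c - x.1‖ < ‖x.1‖) :
    polarize c v x = v x ⊓ v (reflect c x) := by
  rw [polarize, if_neg h.not_gt, if_pos h]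

lemma polarize_of_tie (v : 𝕋 × W → α) (h : ‖x.1‖ = ‖c - x.1‖) : polarize c v x = v x := by
  rw [polarize, if_neg h.not_lt, if_neg h.not_gt]

lemma polarize_reflect_of_near (v : 𝕋 × W → α) (h : ‖x.1‖ < ‖c - x.1‖) :
    polarize c v (reflect c x) = v x ⊓ v (reflect c x) := by
  rw [polarize_of_far, reflect_reflect, inf_comm]
  simpa only [reflect, sub_sub_cancel] using h

lemma polarize_reflect_of_tie (v : 𝕋 × W → α) (h : ‖x.1‖ = ‖c - x.1‖) :
    polarize c v (reflect c x) = v (reflect c x) :=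
  polarize_of_tie v (by simpa only [reflect, sub_sub_cancel] using h.symm)

lemma polarize_zero (v : 𝕋 × W → α) : polarize 0 v = v :=
  funext fun x => polarize_of_tie v (by rw [zero_sub, norm_neg])

end Lattice

lemma polarize_eq_or_swap [LinearOrder α] (c : 𝕋) (v : 𝕋 × W → α) (x : 𝕋 × W) :
    (polarize c v x = v x ∧ polarize c v (reflect c x) = v (reflect c x)) ∨
      (polarize c v x = v (reflect c x) ∧ polarize c v (reflect c x) = v x) := by
  wlog h : ‖x.1‖ ≤ ‖c - x.1‖ generalizing x
  · have := this (reflect c x) (by simpa only [reflect, sub_sub_cancel] using (not_le.1 h).le)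
    rw [reflect_reflect] at this
    exact this.imp And.symm And.symm
  rcases h.lt_or_eq with h | h
  · rw [polarize_of_near v h, polarize_reflect_of_near v h]
    rcases le_total (v x) (v (reflect c x)) with h | h <;>
      simp only [h, sup_of_le_left, sup_of_le_right, inf_of_le_left, inf_of_le_right, and_self,
        true_or, or_true]
  · exact .inl ⟨polarize_of_tie v h, polarize_reflect_of_tie v h⟩

lemma polarize_nonneg {v : 𝕋 × W → ℝ} (c : 𝕋) (hv : ∀ x, 0 ≤ v x) (x : 𝕋 × W) :
    0 ≤ polarize c v x := by
  rcases polarize_eq_or_swap c v x with ⟨h, -⟩ | ⟨h, -⟩ <;> rw [h] <;> exact hv _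

variable [MeasurableSpace W]

lemma measurable_reflect (c : 𝕋) : Measurable (reflect c : 𝕋 × W → 𝕋 × W) :=
  (measurable_const.sub measurable_fst).prodMk measurable_snd

lemma measurableSet_near (c : 𝕋) : MeasurableSet {x : 𝕋 × W | ‖x.1‖ < ‖c - x.1‖} :=
  measurableSet_lt (by fun_prop) (by fun_prop)

lemma measurableSet_far (c : 𝕋) : MeasurableSet {x : 𝕋 × W | ‖c - x.1‖ < ‖x.1‖} :=
  measurableSet_lt (by fun_prop) (by fun_prop)

lemma measurable_polarize (c : 𝕋) {v : 𝕋 × W → ℝ} (hv : Measurable v) :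
    Measurable (polarize c v) :=
  have hv' := hv.comp (measurable_reflect c)
  (hv.sup hv').ite (measurableSet_near c) ((hv.inf hv').ite (measurableSet_far c) hv)

variable (ν : Measure W) [SFinite ν]

lemma measurePreserving_reflect (c : 𝕋) :
    MeasurePreserving (reflect c : 𝕋 × W → 𝕋 × W) (volume.prod ν) (volume.prod ν) :=
  (Measure.measurePreserving_sub_left volume c).prod (.id ν)

lemma measurePreserving_rotate (a : 𝕋) :
    MeasurePreserving (rotate a : 𝕋 × W → 𝕋 × W) (volume.prod ν) (volume.prod ν) :=
  (measurePreserving_add_right volume a).prod (.id ν)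

end Polarization

section Energy

lemma mul_add_mul_le_mul_add_mul_ennreal {a b c d : ℝ≥0∞} (hab : a ≤ b) (hcd : c ≤ d) :
    a * d + b * c ≤ a * c + b * d := by
  obtain ⟨e, rfl⟩ := exists_add_of_le hab
  obtain ⟨f, rfl⟩ := exists_add_of_le hcd
  exact le_self_add.trans_eq (by ring : _ + e * f = _)

lemma mul_add_mul_lt_mul_add_mul_ennreal {a b c d : ℝ≥0∞} (hab : a < b) (hcd : c < d)
    (hfin : a * c + b * d ≠ ⊤) : a * d + b * c < a * c + b * d := by
  obtain ⟨e, rfl⟩ := exists_add_of_le hab.le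
  obtain ⟨f, rfl⟩ := exists_add_of_le hcd.le
  have he : e ≠ 0 := by rintro rfl; simp at hab
  have hf : f ≠ 0 := by rintro rfl; simp at hcd
  have hsum : a * c + (a + e) * (c + f) = a * (c + f) + (a + e) * c + e * f := by ring
  rw [hsum] at hfin ⊢
  exact ENNReal.lt_add_right (ENNReal.add_ne_top.1 hfin).1 (mul_ne_zero he hf)

/-- An interaction kernel on `𝕋 × W` which is a strictly decreasing function of the distance of
the circle coordinates; the profile is only ever evaluated on `[0, π]`. -/
structure CircleKernel (W : Type*) [MeasurableSpace W] where
  /-- The kernel as a function of the two `W`-coordinates and of the distance on the circle. -/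
  profile : W → W → ℝ → ℝ≥0∞
  measurable_profile : Measurable fun q : (W × W) × ℝ => profile q.1.1 q.1.2 q.2
  strictAntiOn_profile : ∀ w w', StrictAntiOn (profile w w') (Icc 0 π)
  profile_pi_pos : ∀ w w', 0 < profile w w' π

namespace CircleKernel

section Kernel

variable {W : Type*} [MeasurableSpace W] (K : CircleKernel W) {c : 𝕋} {x y : 𝕋 × W}

/-- The value of the kernel at a pair of points; written `K x y`. -/
noncomputable def eval (K : CircleKernel W) (x y : 𝕋 × W) : ℝ≥0∞ :=
  K.profile x.2 y.2 ‖x.1 - y.1‖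

noncomputable instance : CoeFun (CircleKernel W) fun _ => 𝕋 × W → 𝕋 × W → ℝ≥0∞ := ⟨eval⟩

lemma measurable_uncurry : Measurable fun z : (𝕋 × W) × (𝕋 × W) => K z.1 z.2 :=
  K.measurable_profile.comp (by fun_prop :
    Measurable fun z : (𝕋 × W) × (𝕋 × W) => ((z.1.2, z.2.2), ‖z.1.1 - z.2.1‖))

lemma pos (x y : 𝕋 × W) : 0 < K x y :=
  (K.profile_pi_pos _ _).trans_le <| (K.strictAntiOn_profile _ _).antitoneOn
    (norm_mem_Icc _) (right_mem_Icc.2 pi_pos.le) (norm_le_pi _)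

lemma reflect_reflect (c : 𝕋) (x y : 𝕋 × W) : K (reflect c x) (reflect c y) = K x y :=
  congrArg _ (norm_reflect_sub_reflect c x.1 y.1)

lemma reflect_left (c : 𝕋) (x y : 𝕋 × W) : K (reflect c x) y = K x (reflect c y) :=
  congrArg _ (norm_reflect_sub c x.1 y.1)

lemma rotate_rotate (a : 𝕋) (x y : 𝕋 × W) : K (rotate a x) (rotate a y) = K x y :=
  congrArg (fun θ => K.profile x.2 y.2 ‖θ‖) (add_sub_add_right_eq_sub x.1 y.1 a)

lemma reflect_right_lt (hx : ‖x.1‖ < ‖c - x.1‖) (hy : ‖y.1‖ < ‖c - y.1‖) :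
    K x (reflect c y) < K x y :=
  K.strictAntiOn_profile _ _ (norm_mem_Icc _) (norm_mem_Icc _)
    (norm_sub_lt_norm_sub_reflect hx hy)

lemma reflect_right_eq_of_tie_left (hc : c ≠ 0) (hx : ‖x.1‖ = ‖c - x.1‖) :
    K x (reflect c y) = K x y :=
  congrArg (K.profile _ _) (norm_sub_eq_norm_sub_reflect hc hx y.1).symm

lemma reflect_right_eq_of_tie_right (hc : c ≠ 0) (hy : ‖y.1‖ = ‖c - y.1‖) :
    K x (reflect c y) = K x y := by
  have := norm_sub_eq_norm_sub_reflect hc hy x.1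
  rw [norm_sub_rev, norm_sub_rev y.1, norm_reflect_sub] at this
  exact congrArg (K.profile _ _) this.symm

end Kernel

section Integral

variable {W : Type*} [MeasureSpace W] (K : CircleKernel W) (φ : ConvexPotential)

/-- The energy density `φ (v x - v y) K(x, y)` of a function on `𝕋 × W`. -/
noncomputable def density (v : 𝕋 × W → ℝ) (x y : 𝕋 × W) : ℝ≥0∞ := φ.cost (v x) (v y) * K x y

/-- The interaction energy `∬ φ (v x - v y) K(x, y) dx dy` of a function on `𝕋 × W`. -/
noncomputable def energy (v : 𝕋 × W → ℝ) : ℝ≥0∞ :=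
  ∫⁻ z : (𝕋 × W) × (𝕋 × W), K.density φ v z.1 z.2

/-- The sum of the energy density over the orbit of `(x, y)` under reflection of either point. -/
noncomputable def orbitDensity (c : 𝕋) (v : 𝕋 × W → ℝ) (x y : 𝕋 × W) : ℝ≥0∞ :=
  (φ.cost (v x) (v y) + φ.cost (v (reflect c x)) (v (reflect c y))) * K x y +
    (φ.cost (v x) (v (reflect c y)) + φ.cost (v (reflect c x)) (v y)) * K x (reflect c y)

variable {K φ} {c : 𝕋} {v w : 𝕋 × W → ℝ} {x y : 𝕋 × W}

lemma measurable_density (hv : Measurable v) :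
    Measurable fun z : (𝕋 × W) × (𝕋 × W) => K.density φ v z.1 z.2 :=
  (φ.measurable_cost.comp ((hv.comp measurable_fst).prodMk (hv.comp measurable_snd))).mul
    K.measurable_uncurry

lemma orbitDensity_reflect_left (c : 𝕋) (v : 𝕋 × W → ℝ) (x y : 𝕋 × W) :
    K.orbitDensity φ c v (reflect c x) y = K.orbitDensity φ c v x y := by
  simp only [orbitDensity, K.reflect_left, PeriodicRearrangement.reflect_reflect]
  ring

lemma orbitDensity_reflect_right (c : 𝕋) (v : 𝕋 × W → ℝ) (x y : 𝕋 × W) :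
    K.orbitDensity φ c v x (reflect c y) = K.orbitDensity φ c v x y := by
  simp only [orbitDensity, PeriodicRearrangement.reflect_reflect]
  ring

lemma orbitDensity_polarize_of_kernel_eq (h : K x (reflect c y) = K x y) :
    K.orbitDensity φ c (polarize c v) x y = K.orbitDensity φ c v x y := by
  rcases polarize_eq_or_swap c v x with ⟨h₁, h₂⟩ | ⟨h₁, h₂⟩ <;>
    rcases polarize_eq_or_swap c v y with ⟨h₃, h₄⟩ | ⟨h₃, h₄⟩ <;>
    simp only [orbitDensity, h, h₁, h₂, h₃, h₄] <;> ring

lemma orbitDensity_polarize_of_near (hx : ‖x.1‖ < ‖c - x.1‖) (hy : ‖y.1‖ < ‖c - y.1‖) :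
    K.orbitDensity φ c (polarize c v) x y =
      min (φ.cost (v x) (v y) + φ.cost (v (reflect c x)) (v (reflect c y)))
        (φ.cost (v x) (v (reflect c y)) + φ.cost (v (reflect c x)) (v y)) * K x y +
      max (φ.cost (v x) (v y) + φ.cost (v (reflect c x)) (v (reflect c y)))
        (φ.cost (v x) (v (reflect c y)) + φ.cost (v (reflect c x)) (v y)) *
        K x (reflect c y) := by
  simp only [orbitDensity, polarize_of_near v hx, polarize_of_near v hy,
    polarize_reflect_of_near v hx, polarize_reflect_of_near v hy,
    φ.cost_sup_sup_add_cost_inf_inf, φ.cost_sup_inf_add_cost_inf_sup]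

lemma orbitDensity_polarize_le (c : 𝕋) (v : 𝕋 × W → ℝ) (x y : 𝕋 × W) :
    K.orbitDensity φ c (polarize c v) x y ≤ K.orbitDensity φ c v x y := by
  wlog hx : ‖x.1‖ ≤ ‖c - x.1‖ generalizing x
  · rw [← orbitDensity_reflect_left, ← orbitDensity_reflect_left c v]
    exact this _ (by simpa only [reflect, sub_sub_cancel] using (not_le.1 hx).le)
  wlog hy : ‖y.1‖ ≤ ‖c - y.1‖ generalizing y
  · rw [← orbitDensity_reflect_right, ← orbitDensity_reflect_right c v]
    exact this _ (by simpa only [reflect, sub_sub_cancel] using (not_le.1 hy).le)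
  rcases eq_or_ne c 0 with rfl | hc
  · rw [polarize_zero]
  rcases hx.lt_or_eq with hx | hx
  swap; · exact (orbitDensity_polarize_of_kernel_eq (K.reflect_right_eq_of_tie_left hc hx)).le
  rcases hy.lt_or_eq with hy | hy
  swap; · exact (orbitDensity_polarize_of_kernel_eq (K.reflect_right_eq_of_tie_right hc hy)).le
  rw [orbitDensity_polarize_of_near hx hy, orbitDensity]
  set α := φ.cost (v x) (v y) + φ.cost (v (reflect c x)) (v (reflect c y))
  set β := φ.cost (v x) (v (reflect c y)) + φ.cost (v (reflect c x)) (v y)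
  rcases le_total α β with h | h
  · rw [min_eq_left h, max_eq_right h]
  · rw [min_eq_right h, max_eq_left h, add_comm (α * K x y)]
    have hK : K x (reflect c y) ≤ K x y := (K.reflect_right_lt hx hy).le
    simpa only [add_comm] using mul_add_mul_le_mul_add_mul_ennreal h hK

lemma orbitDensity_polarize_lt (hx : ‖x.1‖ < ‖c - x.1‖) (hy : ‖y.1‖ < ‖c - y.1‖)
    (hvx : v x < v (reflect c x)) (hvy : v (reflect c y) < v y)
    (hfin : K.orbitDensity φ c v x y ≠ ⊤) :
    K.orbitDensity φ c (polarize c v) x y < K.orbitDensity φ c v x y := by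
  have hcost := φ.cost_add_cost_lt hvx hvy
  have hK : K x (reflect c y) < K x y := K.reflect_right_lt hx hy
  rw [orbitDensity_polarize_of_near hx hy, min_eq_right hcost.le, max_eq_left hcost.le]
  rw [orbitDensity, add_comm] at hfin
  rw [orbitDensity, add_comm ((φ.cost (v x) (v y) + _) * K x y)]
  exact mul_add_mul_lt_mul_add_mul_ennreal hcost hK hfin

lemma orbitDensity_eq_sum (c : 𝕋) (v : 𝕋 × W → ℝ) (x y : 𝕋 × W) :
    K.orbitDensity φ c v x y = K.density φ v x y + K.density φ v (reflect c x) (reflect c y) +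
      K.density φ v x (reflect c y) + K.density φ v (reflect c x) y := by
  simp only [orbitDensity, density, K.reflect_reflect, K.reflect_left, add_mul, add_assoc]

lemma measurable_density_comp (hv : Measurable v) {f g : 𝕋 × W → 𝕋 × W} (hf : Measurable f)
    (hg : Measurable g) :
    Measurable fun z : (𝕋 × W) × (𝕋 × W) => K.density φ v (f z.1) (g z.2) :=
  (measurable_density hv).comp (hf.prodMap hg)

lemma measurable_orbitDensity (hv : Measurable v) :
    Measurable fun z : (𝕋 × W) × (𝕋 × W) => K.orbitDensity φ c v z.1 z.2 := by
  have hσ := measurable_reflect (W := W) c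
  simp only [orbitDensity_eq_sum]
  exact (((measurable_density hv).add (measurable_density_comp hv hσ hσ)).add
    (measurable_density_comp hv measurable_id hσ)).add
    (measurable_density_comp hv hσ measurable_id)

lemma energy_neg (v : 𝕋 × W → ℝ) : K.energy φ (fun x => -v x) = K.energy φ v := by
  simp only [energy, density, φ.cost_neg_neg]

lemma energy_abs_le (v : 𝕋 × W → ℝ) : K.energy φ (fun x => |v x|) ≤ K.energy φ v :=
  lintegral_mono fun _ => mul_le_mul_left (φ.cost_abs_abs_le _ _) _

lemma energy_congr [SFinite (volume : Measure W)] (h : v =ᵐ[volume] w) :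
    K.energy φ v = K.energy φ w := by
  refine lintegral_congr_ae ?_
  filter_upwards [Measure.quasiMeasurePreserving_fst.ae h, Measure.quasiMeasurePreserving_snd.ae h]
    with z h₁ h₂
  rw [density, density, h₁, h₂]

variable [SFinite (volume : Measure W)]

lemma lintegral_density_comp (hv : Measurable v) {f g : 𝕋 × W → 𝕋 × W}
    (hf : MeasurePreserving f volume volume) (hg : MeasurePreserving g volume volume) :
    ∫⁻ z : (𝕋 × W) × (𝕋 × W), K.density φ v (f z.1) (g z.2) = K.energy φ v :=
  (hf.prod hg).lintegral_comp (measurable_density hv)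

lemma energy_rotate (a : 𝕋) (hv : Measurable v) :
    K.energy φ (fun x => v (rotate a x)) = K.energy φ v := by
  have hrot := measurePreserving_rotate (volume : Measure W) a
  rw [← lintegral_density_comp hv hrot hrot]
  simp only [energy, density, K.rotate_rotate]

lemma lintegral_orbitDensity (c : 𝕋) (hv : Measurable v) :
    ∫⁻ z : (𝕋 × W) × (𝕋 × W), K.orbitDensity φ c v z.1 z.2 = 4 * K.energy φ v := by
  have hσ := measurePreserving_reflect (volume : Measure W) c
  have hid := MeasurePreserving.id (volume : Measure (𝕋 × W))
  have m₀ := measurable_density (K := K) (φ := φ) hv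
  have m₁ := measurable_density_comp (K := K) (φ := φ) hv hσ.measurable hσ.measurable
  have m₂ := measurable_density_comp (K := K) (φ := φ) hv measurable_id hσ.measurable
  have h₂ := lintegral_density_comp (K := K) (φ := φ) hv hid hσ
  have h₃ := lintegral_density_comp (K := K) (φ := φ) hv hσ hid
  simp only [id] at m₂ h₂ h₃
  simp only [orbitDensity_eq_sum]
  rw [lintegral_add_left ((m₀.fun_add m₁).fun_add m₂), lintegral_add_left (m₀.fun_add m₁),
    lintegral_add_left m₀, lintegral_density_comp hv hσ hσ, h₂, h₃, energy]
  ring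

theorem energy_polarize_le (c : 𝕋) (hv : Measurable v) :
    K.energy φ (polarize c v) ≤ K.energy φ v := by
  have h := lintegral_mono (μ := volume) fun z : (𝕋 × W) × (𝕋 × W) =>
    orbitDensity_polarize_le (K := K) (φ := φ) c v z.1 z.2
  rw [lintegral_orbitDensity c hv, lintegral_orbitDensity c (measurable_polarize c hv)] at h
  exact (ENNReal.mul_le_mul_iff_right four_ne_zero ENNReal.ofNat_ne_top).1 h

lemma null_or_null_of_ae_prod {P Q : Set (𝕋 × W)}
    (h : ∀ᵐ z : (𝕋 × W) × (𝕋 × W), ¬ (z.1 ∈ P ∧ z.2 ∈ Q)) : volume P = 0 ∨ volume Q = 0 := by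
  rw [← mul_eq_zero, ← Measure.prod_prod, ← Measure.volume_eq_prod]
  exact measure_eq_zero_iff_ae_notMem.2 h

theorem one_sided_of_energy_polarize_eq (c : 𝕋) (hv : Measurable v) (hfin : K.energy φ v ≠ ⊤)
    (heq : K.energy φ (polarize c v) = K.energy φ v) :
    (∀ᵐ x : 𝕋 × W, ‖x.1‖ < ‖c - x.1‖ → v (reflect c x) ≤ v x) ∨
      (∀ᵐ x : 𝕋 × W, ‖x.1‖ < ‖c - x.1‖ → v x ≤ v (reflect c x)) := by
  have hint := lintegral_orbitDensity (K := K) (φ := φ) c hv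
  have hint' := lintegral_orbitDensity (K := K) (φ := φ) c (measurable_polarize c hv)
  have hfin' : 4 * K.energy φ v ≠ ⊤ := ENNReal.mul_ne_top ENNReal.ofNat_ne_top hfin
  have hdens := ae_eq_of_ae_le_of_lintegral_le
    (.of_forall fun z : (𝕋 × W) × (𝕋 × W) => orbitDensity_polarize_le c v z.1 z.2)
    (by rwa [hint', heq]) (measurable_orbitDensity hv).aemeasurable (by rw [hint, hint', heq])
  have hlt := ae_lt_top (measurable_orbitDensity (K := K) (φ := φ) hv) (by rwa [hint])
  have hnull := null_or_null_of_ae_prod (W := W)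
    (P := {x | ‖x.1‖ < ‖c - x.1‖ ∧ v x < v (reflect c x)})
    (Q := {y | ‖y.1‖ < ‖c - y.1‖ ∧ v (reflect c y) < v y}) (by
      filter_upwards [hdens, hlt] with z hz hlt
      rintro ⟨⟨hx, hvx⟩, hy, hvy⟩
      exact (orbitDensity_polarize_lt hx hy hvx hvy hlt.ne).ne hz)
  refine hnull.imp (fun h => ?_) (fun h => ?_) <;>
    filter_upwards [measure_eq_zero_iff_ae_notMem.1 h] with x hx hnear <;>
    exact not_lt.1 fun hlt => hx ⟨hnear, hlt⟩

theorem one_signed_of_energy_abs_eq (hv : Measurable v) (hfin : K.energy φ v ≠ ⊤)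
    (heq : K.energy φ (fun x => |v x|) = K.energy φ v) :
    (∀ᵐ x : 𝕋 × W, 0 ≤ v x) ∨ (∀ᵐ x : 𝕋 × W, v x ≤ 0) := by
  have hdens := ae_eq_of_ae_le_of_lintegral_le
    (.of_forall fun z : (𝕋 × W) × (𝕋 × W) =>
      mul_le_mul_left (φ.cost_abs_abs_le (v z.1) (v z.2)) (K z.1 z.2))
    (heq.trans_ne hfin) (measurable_density hv).aemeasurable heq.ge
  have hlt := ae_lt_top (measurable_density (K := K) (φ := φ) hv) hfin
  have hnull := null_or_null_of_ae_prod (W := W) (P := {x | v x < 0}) (Q := {y | 0 < v y}) (by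
    filter_upwards [hdens, hlt] with z hz hlt
    rintro ⟨hx, hy⟩
    have hcost := φ.cost_abs_abs_lt hx hy
    have hK : K z.1 z.2 ≠ ⊤ := by
      intro htop
      rw [density, htop, ENNReal.mul_top hcost.ne_bot] at hlt
      exact hlt.ne rfl
    exact hcost.ne ((ENNReal.mul_left_inj (K.pos _ _).ne' hK).1 hz))
  refine hnull.imp (fun h => ?_) (fun h => ?_) <;>
    filter_upwards [measure_eq_zero_iff_ae_notMem.1 h] with x hx <;>
    exact not_lt.1 hx

end Integral

end CircleKernel

end Energy

section SteinerSymmetrization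

variable {W : Type*}

/-- The section of a subset of `𝕋 × W` over a point of `W`. -/
def fiber (A : Set (𝕋 × W)) (w : W) : Set 𝕋 := (·, w) ⁻¹' A

/-- Steiner symmetrization in the circle variable: each fiber is replaced by the arc centred at `0`
of the same length. -/
noncomputable def steinerSymm (A : Set (𝕋 × W)) : Set (𝕋 × W) :=
  {z | ‖z.1‖ < volume.real (fiber A z.2) / 2}

/-- The two-point rearrangement of a set. -/
noncomputable def polarizeSet (c : 𝕋) (A : Set (𝕋 × W)) : Set (𝕋 × W) :=
  {z | polarize c (· ∈ A) z}

/-- The points which a polarization moves from `A` to its Steiner symmetrization. -/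
def gainSet (c : 𝕋) (A : Set (𝕋 × W)) : Set (𝕋 × W) :=
  {z | z ∈ steinerSymm A \ A ∧ reflect c z ∈ A \ steinerSymm A}

lemma volume_fiber_steinerSymm (A : Set (𝕋 × W)) (w : W) :
    volume (fiber (steinerSymm A) w) = volume (fiber A w) := by
  have hle : volume.real (fiber A w) ≤ 2 * π :=
    ENNReal.toReal_le_of_le_ofReal two_pi_pos.le
      ((measure_mono (subset_univ _)).trans_eq (AddCircle.measure_univ _))
  rw [show fiber (steinerSymm A) w = {θ | ‖θ‖ < volume.real (fiber A w) / 2} from rfl,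
    volume_norm_lt, mul_div_cancel₀ _ two_ne_zero, min_eq_right hle,
    ofReal_measureReal (measure_ne_top _ _)]

section Pointwise

variable {c : 𝕋} {A : Set (𝕋 × W)} {z : 𝕋 × W}

lemma mem_polarizeSet_of_near (h : ‖z.1‖ < ‖c - z.1‖) :
    z ∈ polarizeSet c A ↔ z ∈ A ∨ reflect c z ∈ A :=
  iff_of_eq (polarize_of_near (· ∈ A) h)

lemma reflect_mem_polarizeSet_of_near (h : ‖z.1‖ < ‖c - z.1‖) :
    reflect c z ∈ polarizeSet c A ↔ z ∈ A ∧ reflect c z ∈ A :=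
  iff_of_eq (polarize_reflect_of_near (· ∈ A) h)

lemma mem_polarizeSet_of_tie (h : ‖z.1‖ = ‖c - z.1‖) : z ∈ polarizeSet c A ↔ z ∈ A :=
  iff_of_eq (polarize_of_tie (· ∈ A) h)

lemma reflect_mem_polarizeSet_of_tie (h : ‖z.1‖ = ‖c - z.1‖) :
    reflect c z ∈ polarizeSet c A ↔ reflect c z ∈ A :=
  iff_of_eq (polarize_reflect_of_tie (· ∈ A) h)

lemma mem_steinerSymm_of_reflect_mem (h : ‖z.1‖ ≤ ‖c - z.1‖) (hz : reflect c z ∈ steinerSymm A) :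
    z ∈ steinerSymm A :=
  h.trans_lt hz

/-- The sum of the values of the indicator of `A` at a point and at its mirror image. -/
noncomputable def pairCount (c : 𝕋) (A : Set (𝕋 × W)) (z : 𝕋 × W) : ℝ≥0∞ :=
  A.indicator 1 z + A.indicator 1 (reflect c z)

lemma pairCount_reflect : pairCount c A (reflect c z) = pairCount c A z := by
  rw [pairCount, pairCount, reflect_reflect, add_comm]

lemma pairCount_polarizeSet (c : 𝕋) (A : Set (𝕋 × W)) (z : 𝕋 × W) :
    pairCount c (polarizeSet c A) z = pairCount c A z := by
  wlog h : ‖z.1‖ ≤ ‖c - z.1‖ generalizing z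
  · rw [← pairCount_reflect, ← pairCount_reflect (A := A)]
    exact this _ (by simpa only [reflect, sub_sub_cancel] using (not_le.1 h).le)
  classical
  rcases h.lt_or_eq with h | h
  · by_cases h₁ : z ∈ A <;> by_cases h₂ : reflect c z ∈ A <;>
      simp [pairCount, mem_polarizeSet_of_near h, reflect_mem_polarizeSet_of_near h, h₁, h₂]
  · simp only [pairCount, indicator_apply, mem_polarizeSet_of_tie h,
      reflect_mem_polarizeSet_of_tie h]

lemma pairCount_polarizeSet_diff_add_gainSet (c : 𝕋) (A : Set (𝕋 × W)) (z : 𝕋 × W) :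
    pairCount c (polarizeSet c A \ steinerSymm A) z + pairCount c (gainSet c A) z =
      pairCount c (A \ steinerSymm A) z := by
  wlog h : ‖z.1‖ ≤ ‖c - z.1‖ generalizing z
  · rw [← pairCount_reflect, ← pairCount_reflect (A := gainSet c A),
      ← pairCount_reflect (A := A \ steinerSymm A)]
    exact this _ (by simpa only [reflect, sub_sub_cancel] using (not_le.1 h).le)
  classical
  have hS := mem_steinerSymm_of_reflect_mem (A := A) h
  rcases h.lt_or_eq with h | h
  · by_cases h₁ : z ∈ A <;> by_cases h₂ : reflect c z ∈ A <;> by_cases h₃ : z ∈ steinerSymm A <;>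
      by_cases h₄ : reflect c z ∈ steinerSymm A <;>
      simp_all [pairCount, gainSet, mem_polarizeSet_of_near h, reflect_mem_polarizeSet_of_near h]
  · have hS' : reflect c z ∈ steinerSymm A ↔ z ∈ steinerSymm A := by
      refine ⟨hS, fun hz => ?_⟩
      rw [steinerSymm, mem_ofPred_eq] at hz ⊢
      exact h ▸ hz
    by_cases h₁ : z ∈ steinerSymm A <;>
      simp [pairCount, gainSet, indicator_apply, mem_polarizeSet_of_tie h,
        reflect_mem_polarizeSet_of_tie h, hS', h₁]

end Pointwise

variable [MeasurableSpace W] {c : 𝕋} {A : Set (𝕋 × W)}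

lemma measurableSet_fiber (hA : MeasurableSet A) (w : W) : MeasurableSet (fiber A w) :=
  measurable_prodMk_right hA

lemma measurableSet_steinerSymm (hA : MeasurableSet A) : MeasurableSet (steinerSymm A) := by
  have h : Measurable fun w => volume (fiber A w) := measurable_measure_prodMk_right hA
  exact measurableSet_lt measurable_fst.norm ((h.comp measurable_snd).ennreal_toReal.div_const 2)

lemma measurableSet_gainSet (c : 𝕋) (hA : MeasurableSet A) : MeasurableSet (gainSet c A) :=
  ((measurableSet_steinerSymm hA).diff hA).inter
    (measurable_reflect c (hA.diff (measurableSet_steinerSymm hA)))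

lemma measurableSet_polarizeSet (c : 𝕋) (hA : MeasurableSet A) :
    MeasurableSet (polarizeSet c A) := by
  have hA' := measurable_reflect c hA
  convert ((measurableSet_near c).ite (hA.union hA') ((measurableSet_far c).ite (hA.inter hA') hA))
    using 1
  ext z
  by_cases h₁ : ‖z.1‖ < ‖c - z.1‖ <;> by_cases h₂ : ‖c - z.1‖ < ‖z.1‖ <;>
    simp [polarizeSet, polarize, Set.ite, h₁, h₂]

lemma lintegral_eq_of_add_comp_eq {X : Type*} [MeasurableSpace X] {μ : Measure X} {σ : X → X}
    (hσ : MeasurePreserving σ μ μ) {f g : X → ℝ≥0∞} (hf : Measurable f) (hg : Measurable g)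
    (h : ∀ x, f x + f (σ x) = g x + g (σ x)) : ∫⁻ x, f x ∂μ = ∫⁻ x, g x ∂μ := by
  have hint := lintegral_congr (μ := μ) h
  rw [lintegral_add_left hf, lintegral_add_left hg, hσ.lintegral_comp hf, hσ.lintegral_comp hg,
    ← two_mul, ← two_mul] at hint
  exact (ENNReal.mul_right_inj two_ne_zero ENNReal.ofNat_ne_top).1 hint

lemma volume_fiber_polarizeSet (c : 𝕋) (hA : MeasurableSet A) (w : W) :
    volume (fiber (polarizeSet c A) w) = volume (fiber A w) := by
  have hP := measurableSet_fiber (measurableSet_polarizeSet c hA) w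
  have hA := measurableSet_fiber hA w
  rw [← lintegral_indicator_one hP, ← lintegral_indicator_one hA]
  exact lintegral_eq_of_add_comp_eq (Measure.measurePreserving_sub_left volume c)
    (measurable_one.indicator hP) (measurable_one.indicator hA)
    fun θ => pairCount_polarizeSet c A (θ, w)

lemma steinerSymm_polarizeSet (c : 𝕋) (hA : MeasurableSet A) :
    steinerSymm (polarizeSet c A) = steinerSymm A := by
  simp only [steinerSymm, measureReal_def, volume_fiber_polarizeSet c hA]

lemma volume_fiber_steinerSymm_diff (hA : MeasurableSet A) (w : W) :
    volume (fiber (steinerSymm A \ A) w) = volume (fiber (A \ steinerSymm A) w) :=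
  measure_sdiff_symm (measurableSet_fiber (measurableSet_steinerSymm hA) w).nullMeasurableSet
    (measurableSet_fiber hA w).nullMeasurableSet (volume_fiber_steinerSymm A w)
    (measure_ne_top volume _)

/-- The measure of the part of `A` lying outside its Steiner symmetrization. -/
noncomputable def asymmetry (ν : Measure W) (A : Set (𝕋 × W)) : ℝ≥0∞ :=
  ((volume : Measure 𝕋).prod ν) (A \ steinerSymm A)

variable (ν : Measure W)

section SFinite

variable [SFinite ν]

lemma asymmetry_eq_lintegral (hA : MeasurableSet A) :
    asymmetry ν A = ∫⁻ w, volume (fiber (A \ steinerSymm A) w) ∂ν :=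
  Measure.prod_apply_symm (hA.diff (measurableSet_steinerSymm hA))

lemma measure_steinerSymm_diff (hA : MeasurableSet A) :
    ((volume : Measure 𝕋).prod ν) (steinerSymm A \ A) = asymmetry ν A := by
  rw [asymmetry_eq_lintegral ν hA, Measure.prod_apply_symm ((measurableSet_steinerSymm hA).diff hA)]
  exact lintegral_congr (volume_fiber_steinerSymm_diff hA)

lemma measure_symmDiff_steinerSymm (hA : MeasurableSet A) :
    ((volume : Measure 𝕋).prod ν) (A ∆ steinerSymm A) = 2 * asymmetry ν A := by
  rw [measure_symmDiff_eq hA.nullMeasurableSet (measurableSet_steinerSymm hA).nullMeasurableSet,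
    measure_steinerSymm_diff ν hA, two_mul (asymmetry ν A), asymmetry]

lemma asymmetry_polarizeSet_add_gainSet (c : 𝕋) (hA : MeasurableSet A) :
    asymmetry ν (polarizeSet c A) + ((volume : Measure 𝕋).prod ν) (gainSet c A) =
      asymmetry ν A := by
  have hS := measurableSet_steinerSymm hA
  have hP := (measurableSet_polarizeSet c hA).diff hS
  have hG := measurableSet_gainSet c hA
  rw [asymmetry, asymmetry, steinerSymm_polarizeSet c hA, ← lintegral_indicator_one hP,
    ← lintegral_indicator_one hG, ← lintegral_indicator_one (hA.diff hS),
    ← lintegral_add_left (measurable_one.indicator hP)]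
  refine lintegral_eq_of_add_comp_eq (measurePreserving_reflect ν c)
    ((measurable_one.indicator hP).add (measurable_one.indicator hG))
    (measurable_one.indicator (hA.diff hS)) fun z => ?_
  rw [add_add_add_comm]
  exact pairCount_polarizeSet_diff_add_gainSet c A z

lemma lintegral_measure_gainSet (hA : MeasurableSet A) :
    ∫⁻ c, ((volume : Measure 𝕋).prod ν) (gainSet c A) =
      ∫⁻ w, volume (fiber (A \ steinerSymm A) w) ^ 2 ∂ν := by
  set S := steinerSymm A \ A
  set T := A \ steinerSymm A
  have hS : MeasurableSet S := (measurableSet_steinerSymm hA).diff hA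
  have hT : MeasurableSet T := hA.diff (measurableSet_steinerSymm hA)
  set G : Set ((𝕋 × W) × 𝕋) := {q | q.1 ∈ S ∧ reflect q.2 q.1 ∈ T}
  have hG : MeasurableSet G := (measurable_fst hS).inter <|
    ((measurable_snd.sub measurable_fst.fst).prodMk measurable_fst.snd) hT
  have hslice (z : 𝕋 × W) :
      volume (Prod.mk z ⁻¹' G) = S.indicator (fun z => volume (fiber T z.2)) z := by
    by_cases hz : z ∈ S
    · rw [indicator_of_mem hz, ← (measurePreserving_sub_right volume z.1).measure_preimage
        (measurableSet_fiber hT _).nullMeasurableSet]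
      exact congrArg _ (ext fun c => and_iff_right hz)
    · rw [indicator_of_notMem hz]
      exact measure_mono_null (fun c hc => hz hc.1) measure_empty
  have hmeas : Measurable fun w => volume (fiber T w) := measurable_measure_prodMk_right hT
  calc ∫⁻ c, (volume.prod ν) (gainSet c A)
    _ = ((volume.prod ν).prod volume) G := (Measure.prod_apply_symm hG).symm
    _ = ∫⁻ z, S.indicator (fun z => volume (fiber T z.2)) z ∂(volume.prod ν) := by
      rw [Measure.prod_apply hG]
      exact lintegral_congr hslice
    _ = ∫⁻ w, (∫⁻ θ, (fiber S w).indicator (fun _ => volume (fiber T w)) θ) ∂ν :=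
      lintegral_prod_symm' _ ((hmeas.comp measurable_snd).indicator hS)
    _ = ∫⁻ w, volume (fiber T w) ^ 2 ∂ν := lintegral_congr fun w => by
      rw [lintegral_indicator_const (measurableSet_fiber hS w),
        volume_fiber_steinerSymm_diff hA, sq]

end SFinite

lemma sq_lintegral_le_mul_lintegral_sq {f : W → ℝ≥0∞} (hf : AEMeasurable f ν) :
    (∫⁻ w, f w ∂ν) ^ 2 ≤ (∫⁻ w, f w ^ 2 ∂ν) * ν univ := by
  have h := pow_le_pow_left' (ENNReal.lintegral_mul_le_Lp_mul_Lq ν Real.HolderConjugate.two_two hf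
    (aemeasurable_const (b := 1))) 2
  simpa [mul_pow, ← ENNReal.rpow_mul_natCast] using h

lemma exists_asymmetry_polarizeSet_add_le [IsFiniteMeasure ν] (hA : MeasurableSet A) :
    ∃ c, asymmetry ν (polarizeSet c A) + asymmetry ν A ^ 2 / (ν univ * volume (univ : Set 𝕋)) ≤
      asymmetry ν A := by
  have hint := lintegral_measure_gainSet ν hA
  have hfin : ∫⁻ c, (volume.prod ν) (gainSet c A) ≠ ⊤ :=
    ((lintegral_mono fun c => measure_mono (subset_univ _)).trans_lt <| by
      rw [lintegral_const]; exact ENNReal.mul_lt_top (measure_lt_top _ _) (measure_lt_top _ _)).ne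
  obtain ⟨c, hc⟩ := exists_laverage_le (μ := (volume : Measure 𝕋)) (NeZero.ne _) hfin
  rw [laverage_eq, hint] at hc
  refine ⟨c, ?_⟩
  calc asymmetry ν (polarizeSet c A) + asymmetry ν A ^ 2 / (ν univ * volume univ)
    _ ≤ asymmetry ν (polarizeSet c A) + (volume.prod ν) (gainSet c A) := by
      gcongr
      refine (ENNReal.div_le_of_le_mul ?_).trans hc
      rw [mul_comm (ν univ), ← mul_assoc, ENNReal.div_mul_cancel (NeZero.ne _) (measure_ne_top _ _),
        asymmetry_eq_lintegral ν hA]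
      exact sq_lintegral_le_mul_lintegral_sq ν
        (measurable_measure_prodMk_right (hA.diff (measurableSet_steinerSymm hA))).aemeasurable
    _ = asymmetry ν A := asymmetry_polarizeSet_add_gainSet ν c hA

lemma ae_eq_steinerSymm_of_polarizeSet_ae_eq [IsFiniteMeasure ν] (hA : MeasurableSet A)
    (h : ∀ c, polarizeSet c A =ᵐ[volume.prod ν] A) : A =ᵐ[volume.prod ν] steinerSymm A := by
  obtain ⟨c, hc⟩ := exists_asymmetry_polarizeSet_add_le ν hA
  have hsame : asymmetry ν (polarizeSet c A) = asymmetry ν A := by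
    rw [asymmetry, asymmetry, steinerSymm_polarizeSet c hA]
    exact measure_congr ((h c).diff (ae_eq_refl _))
  have hfin : asymmetry ν A ≠ ⊤ := measure_ne_top _ _
  have hzero : asymmetry ν A = 0 := by
    by_contra hne
    rw [hsame] at hc
    exact (ENNReal.lt_add_right hfin (ENNReal.div_ne_zero.2 ⟨pow_ne_zero 2 hne,
      ENNReal.mul_ne_top (measure_ne_top _ _) (measure_ne_top _ _)⟩)).not_ge hc
  rw [← measure_symmDiff_eq_zero_iff, measure_symmDiff_steinerSymm ν hA, hzero, mul_zero]

end SteinerSymmetrization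

section Rearrangement

variable {W : Type*}

/-- The strict subgraph of a function on `𝕋 × W`, viewed as a subset of `𝕋 × (W × ℝ)`. -/
def subgraph (v : 𝕋 × W → ℝ) : Set (𝕋 × (W × ℝ)) := {z | z.2.2 < v (z.1, z.2.1)}

lemma subgraph_polarize (c : 𝕋) (v : 𝕋 × W → ℝ) :
    subgraph (polarize c v) = polarizeSet c (subgraph v) := by
  ext ⟨θ, w, t⟩
  rcases lt_trichotomy ‖θ‖ ‖c - θ‖ with h | h | h <;>
    simp [subgraph, polarizeSet, polarize, reflect, h, h.not_gt]

/-- The Steiner rearrangement of a nonnegative function in the circle variable, by the layer cake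
formula. -/
noncomputable def steinerRearr (v : 𝕋 × W → ℝ) (x : 𝕋 × W) : ℝ :=
  volume.real ({t | (x.1, x.2, t) ∈ steinerSymm (subgraph v)} ∩ Ioi 0)

lemma steinerRearr_nonneg (v : 𝕋 × W → ℝ) (x : 𝕋 × W) : 0 ≤ steinerRearr v x :=
  measureReal_nonneg

lemma steinerRearr_congr {v w : 𝕋 × W → ℝ}
    (h : steinerSymm (subgraph w) = steinerSymm (subgraph v)) :
    steinerRearr w = steinerRearr v := by
  unfold steinerRearr
  rw [h]

lemma lt_volume_real_inter_Ioi_iff {S : Set ℝ} (hS : IsLowerSet S)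
    (hopen : ∀ t ∈ S, ∃ t' ∈ S, t < t') (hbdd : ∃ t, t ∉ S) {t : ℝ} (ht : 0 ≤ t) :
    t < volume.real (S ∩ Ioi 0) ↔ t ∈ S := by
  have hsub {r : ℝ} (hr : r ∉ S) : S ∩ Ioi 0 ⊆ Ioc 0 r := fun s hs =>
    ⟨hs.2, le_of_not_ge fun h => hr (hS h hs.1)⟩
  constructor
  · intro hlt
    by_contra htS
    refine hlt.not_ge ((measureReal_mono (hsub htS) measure_Ioc_lt_top.ne).trans_eq ?_)
    rw [Real.volume_real_Ioc_of_le ht, sub_zero]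
  · intro htS
    obtain ⟨t', ht'S, htt'⟩ := hopen t htS
    obtain ⟨T, hT⟩ := hbdd
    refine htt'.trans_le (?_ : t' ≤ _)
    rw [← sub_zero t', ← Real.volume_real_Ioc_of_le (ht.trans htt'.le)]
    exact measureReal_mono (fun s hs => ⟨hS hs.2 ht'S, hs.1⟩)
      (measure_ne_top_of_subset (hsub hT) measure_Ioc_lt_top.ne)

lemma mem_steinerSymm_iff {A : Set (𝕋 × W)} {z : 𝕋 × W} :
    z ∈ steinerSymm A ↔ ENNReal.ofReal (2 * ‖z.1‖) < volume (fiber A z.2) := by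
  rw [ENNReal.ofReal_lt_iff_lt_toReal (by positivity) (measure_ne_top _ _), steinerSymm,
    mem_ofPred_eq, lt_div_iff₀' two_pos, measureReal_def]

lemma antitone_fiber_subgraph (v : 𝕋 × W → ℝ) (w : W) :
    Antitone fun t => fiber (subgraph v) (w, t) :=
  fun _ _ h _ hθ => h.trans_lt hθ

lemma isLowerSet_steinerSymm_subgraph (v : 𝕋 × W → ℝ) (x : 𝕋 × W) :
    IsLowerSet {t | (x.1, x.2, t) ∈ steinerSymm (subgraph v)} := fun _ _ h ht =>
  mem_steinerSymm_iff.2 <| (mem_steinerSymm_iff.1 ht).trans_le <|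
    measure_mono (antitone_fiber_subgraph v x.2 h)

lemma exists_gt_mem_steinerSymm_subgraph {v : 𝕋 × W → ℝ} {x : 𝕋 × W} {t : ℝ}
    (ht : (x.1, x.2, t) ∈ steinerSymm (subgraph v)) :
    ∃ t', (x.1, x.2, t') ∈ steinerSymm (subgraph v) ∧ t < t' := by
  have hmono : Monotone fun n : ℕ => fiber (subgraph v) (x.2, t + 1 / ((n : ℝ) + 1)) :=
    fun _ _ h => antitone_fiber_subgraph v x.2 (by gcongr)
  have hU : fiber (subgraph v) (x.2, t) =
      ⋃ n : ℕ, fiber (subgraph v) (x.2, t + 1 / ((n : ℝ) + 1)) := by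
    refine Subset.antisymm (fun θ hθ => ?_) (iUnion_subset fun n =>
      antitone_fiber_subgraph v x.2 (le_add_of_nonneg_right (by positivity)))
    obtain ⟨n, hn⟩ := exists_nat_one_div_lt (sub_pos.2 (show t < v (θ, x.2) from hθ))
    exact mem_iUnion.2 ⟨n, lt_sub_iff_add_lt'.1 hn⟩
  rw [mem_steinerSymm_iff, hU, hmono.measure_iUnion, lt_iSup_iff] at ht
  obtain ⟨n, hn⟩ := ht
  exact ⟨_, mem_steinerSymm_iff.2 hn, lt_add_of_pos_right _ (by positivity)⟩

variable {v : 𝕋 × W → ℝ}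

section Measurable

variable [MeasurableSpace W]

lemma measurableSet_subgraph (hv : Measurable v) : MeasurableSet (subgraph v) :=
  measurableSet_lt measurable_snd.snd (hv.comp (measurable_fst.prodMk measurable_snd.fst))

lemma measurable_steinerRearr (hv : Measurable v) : Measurable (steinerRearr v) := by
  have h : MeasurableSet {z : (𝕋 × W) × ℝ |
      (z.1.1, z.1.2, z.2) ∈ steinerSymm (subgraph v) ∧ 0 < z.2} :=
    (MeasurableEquiv.prodAssoc.measurable
      (measurableSet_steinerSymm (measurableSet_subgraph hv))).inter
      (measurableSet_lt measurable_const measurable_snd)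
  exact (measurable_measure_prodMk_left h).ennreal_toReal

lemma exists_notMem_steinerSymm_subgraph (hv : Measurable v) {x : 𝕋 × W} (hx : x.1 ≠ 0) :
    ∃ t, (x.1, x.2, t) ∉ steinerSymm (subgraph v) := by
  have hanti : Antitone fun n : ℕ => fiber (subgraph v) (x.2, (n : ℝ)) :=
    fun _ _ h => antitone_fiber_subgraph v x.2 (Nat.cast_le.2 h)
  have hI : ⋂ n : ℕ, fiber (subgraph v) (x.2, (n : ℝ)) = ∅ := by
    refine eq_empty_of_forall_notMem fun θ hθ => ?_
    obtain ⟨n, hn⟩ := exists_nat_ge (v (θ, x.2))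
    exact hn.not_gt (mem_iInter.1 hθ n)
  have hinf : ⨅ n : ℕ, volume (fiber (subgraph v) (x.2, (n : ℝ))) = 0 := by
    rw [← hanti.measure_iInter
      (fun n => (measurableSet_fiber (measurableSet_subgraph hv) _).nullMeasurableSet)
      ⟨0, measure_ne_top _ _⟩, hI, measure_empty]
  have hpos : 0 < ENNReal.ofReal (2 * ‖x.1‖) :=
    ENNReal.ofReal_pos.2 (mul_pos two_pos (norm_pos_iff.2 hx))
  obtain ⟨n, hn⟩ := iInf_lt_iff.1 (hinf.trans_lt hpos)
  refine ⟨n, ?_⟩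
  rw [mem_steinerSymm_iff]
  exact hn.not_gt

lemma lt_steinerRearr_iff (hv : Measurable v) {x : 𝕋 × W} (hx : x.1 ≠ 0) {t : ℝ} (ht : 0 ≤ t) :
    t < steinerRearr v x ↔ (x.1, x.2, t) ∈ steinerSymm (subgraph v) :=
  lt_volume_real_inter_Ioi_iff (isLowerSet_steinerSymm_subgraph v x)
    (fun _ => exists_gt_mem_steinerSymm_subgraph) (exists_notMem_steinerSymm_subgraph hv hx) ht

end Measurable

variable [MeasureSpace W]

lemma subgraph_steinerRearr_ae_eq (hv : Measurable v) (hv₀ : ∀ x, 0 ≤ v x) :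
    subgraph (steinerRearr v) =ᵐ[volume] steinerSymm (subgraph v) := by
  filter_upwards [Measure.quasiMeasurePreserving_fst.ae ae_ne_zero_and_norm_lt_pi]
    with ⟨θ, w, t⟩ hθ
  refine propext ?_
  rcases le_or_gt 0 t with ht | ht
  · exact lt_steinerRearr_iff hv (x := (θ, w)) hθ.1 ht
  · have huniv : fiber (subgraph v) (w, t) = univ :=
      eq_univ_of_forall fun θ => ht.trans_le (hv₀ (θ, w))
    refine iff_of_true (ht.trans_le (steinerRearr_nonneg v _)) (mem_steinerSymm_iff.2 ?_)
    rw [huniv, AddCircle.measure_univ]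
    exact (ENNReal.ofReal_lt_ofReal_iff two_pi_pos).2 (by linarith [hθ.2])

variable [SFinite (volume : Measure W)]

lemma ae_tendsto_of_ae_eventually_mem_subgraph_iff {ι : Type*} {l : Filter ι}
    {f : ι → 𝕋 × W → ℝ} (h : ∀ᵐ z, ∀ᶠ k in l, (z ∈ subgraph (f k) ↔ z ∈ subgraph v)) :
    ∀ᵐ x, Tendsto (f · x) l (𝓝 (v x)) := by
  have h' : ∀ᵐ x, ∀ᵐ t : ℝ, ∀ᶠ k in l, (t < f k x ↔ t < v x) :=
    Measure.ae_ae_of_ae_prod (volume_preserving_prodAssoc.quasiMeasurePreserving.ae h)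
  filter_upwards [h'] with x hx
  have hdense : Dense {t : ℝ | ∀ᶠ k in l, (t < f k x ↔ t < v x)} := Measure.dense_of_ae hx
  refine tendsto_order.2 ⟨fun a ha => ?_, fun a ha => ?_⟩
  · obtain ⟨t, ht, hat, htv⟩ := hdense.exists_between ha
    filter_upwards [ht] with k hk using hat.trans (hk.2 htv)
  · obtain ⟨t, ht, hvt, hta⟩ := hdense.exists_between ha
    filter_upwards [ht] with k hk
    exact (not_lt.1 fun h => hvt.not_gt (hk.1 h)).trans_lt hta

lemma ae_eq_of_subgraph_ae_eq {w : 𝕋 × W → ℝ} (h : subgraph v =ᵐ[volume] subgraph w) :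
    v =ᵐ[volume] w := by
  filter_upwards [ae_tendsto_of_ae_eventually_mem_subgraph_iff (l := (⊤ : Filter ℕ))
    (f := fun _ => v) (h.mem_iff.mono fun z hz => .of_forall fun _ => hz)] with x hx
  exact tendsto_const_nhds_iff.1 hx

end Rearrangement

section RearrangementInequality

variable {W : Type*} [MeasureSpace W] {v w : 𝕋 × W → ℝ}

section ReferenceMeasure

variable (W) [SFinite (volume : Measure W)]

/-- A finite measure on `W × ℝ` with the same null sets as the volume; the asymmetry of a subgraph
with respect to it is finite. -/
noncomputable def refMeasure : Measure (W × ℝ) := (volume : Measure (W × ℝ)).toFinite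

instance : IsFiniteMeasure (refMeasure W) :=
  inferInstanceAs (IsFiniteMeasure (volume : Measure (W × ℝ)).toFinite)

lemma ae_prod_refMeasure :
    ae ((volume : Measure 𝕋).prod (refMeasure W)) = ae (volume : Measure (𝕋 × (W × ℝ))) :=
  le_antisymm
    (Measure.AbsolutelyContinuous.rfl.prod (toFinite_absolutelyContinuous _)).ae_le
    (Measure.AbsolutelyContinuous.rfl.prod (absolutelyContinuous_toFinite _)).ae_le

end ReferenceMeasure

lemma steinerSymm_subgraph_polarize (c : 𝕋) (hv : Measurable v) :
    steinerSymm (subgraph (polarize c v)) = steinerSymm (subgraph v) := by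
  rw [subgraph_polarize, steinerSymm_polarizeSet c (measurableSet_subgraph hv)]

namespace CircleKernel

variable {K : CircleKernel W} {φ : ConvexPotential}

lemma energy_le_of_ae_tendsto [SFinite (volume : Measure W)] {f : ℕ → 𝕋 × W → ℝ} {C : ℝ≥0∞}
    (hf : ∀ k, Measurable (f k)) (hfv : ∀ᵐ x, Tendsto (f · x) atTop (𝓝 (v x)))
    (hC : ∀ k, K.energy φ (f k) ≤ C) : K.energy φ v ≤ C := by
  have hlim : ∀ᵐ z : (𝕋 × W) × (𝕋 × W),
      K.density φ v z.1 z.2 ≤ liminf (fun k => K.density φ (f k) z.1 z.2) atTop := by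
    filter_upwards [Measure.quasiMeasurePreserving_fst.ae hfv,
      Measure.quasiMeasurePreserving_snd.ae hfv] with z h₁ h₂
    rcases eq_or_ne (φ.cost (v z.1) (v z.2)) 0 with h₀ | h₀
    · rw [density, h₀, zero_mul]
      exact zero_le
    · have hcost : Tendsto (fun k => φ.cost (f k z.1) (f k z.2)) atTop
          (𝓝 (φ.cost (v z.1) (v z.2))) :=
        ENNReal.tendsto_ofReal ((φ.continuous.tendsto _).comp (h₁.sub h₂))
      exact (ENNReal.Tendsto.mul_const hcost (.inl h₀)).liminf_eq.ge
  calc K.energy φ v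
    _ ≤ ∫⁻ z : (𝕋 × W) × (𝕋 × W), liminf (fun k => K.density φ (f k) z.1 z.2) atTop :=
      lintegral_mono_ae hlim
    _ ≤ liminf (fun k => K.energy φ (f k)) atTop :=
      lintegral_liminf_le fun k => measurable_density (hf k)
    _ ≤ C := liminf_le_of_le (by isBoundedDefault) fun b hb =>
      let ⟨k, hk⟩ := hb.exists; hk.trans (hC k)

variable (K φ) in
/-- The nonnegative functions whose energy is at most that of `v` and which have the same
rearrangement as `v`; the class is stable under polarization. -/
structure IsCompetitor (v w : 𝕋 × W → ℝ) : Prop where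
  measurable : Measurable w
  nonneg : ∀ x, 0 ≤ w x
  energy_le : K.energy φ w ≤ K.energy φ v
  steinerSymm_eq : steinerSymm (subgraph w) = steinerSymm (subgraph v)

variable [SFinite (volume : Measure W)]

lemma IsCompetitor.polarize (h : IsCompetitor K φ v w) (c : 𝕋) :
    IsCompetitor K φ v (polarize c w) where
  measurable := measurable_polarize c h.measurable
  nonneg := polarize_nonneg c h.nonneg
  energy_le := (energy_polarize_le c h.measurable).trans h.energy_le
  steinerSymm_eq := (steinerSymm_subgraph_polarize c h.measurable).trans h.steinerSymm_eq

/- A polarization chosen on average lowers the asymmetry `i` by a multiple of `i ^ 2`, so that the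
infimum over all competitors cannot be positive. -/
lemma IsCompetitor.exists_asymmetry_lt (hv : IsCompetitor K φ v v) {ε : ℝ≥0∞} (hε : ε ≠ 0) :
    ∃ w, IsCompetitor K φ v w ∧ asymmetry (refMeasure W) (subgraph w) < ε := by
  set i := ⨅ w : {w // IsCompetitor K φ v w}, asymmetry (refMeasure W) (subgraph w.1)
  have hle {w : 𝕋 × W → ℝ} (hw : IsCompetitor K φ v w) :
      i ≤ asymmetry (refMeasure W) (subgraph w) :=
    iInf_le (fun w : {w // IsCompetitor K φ v w} => _) ⟨w, hw⟩
  have hi_zero : i = 0 := by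
    by_contra hne
    set δ := i ^ 2 / (refMeasure W univ * volume (univ : Set 𝕋))
    have hδ_ne : δ ≠ 0 := ENNReal.div_ne_zero.2 ⟨pow_ne_zero 2 hne,
      ENNReal.mul_ne_top (measure_ne_top _ _) (measure_ne_top _ _)⟩
    have hi_top : i ≠ ⊤ := ne_top_of_le_ne_top (measure_ne_top _ _) (hle hv)
    obtain ⟨⟨w, hw⟩, hlt⟩ := iInf_lt_iff.1 (ENNReal.lt_add_right hi_top hδ_ne)
    obtain ⟨c, hc⟩ := exists_asymmetry_polarizeSet_add_le (refMeasure W)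
      (measurableSet_subgraph hw.measurable)
    rw [← subgraph_polarize] at hc
    have hδ_le : δ ≤ asymmetry (refMeasure W) (subgraph w) ^ 2 /
        (refMeasure W univ * volume (univ : Set 𝕋)) :=
      ENNReal.div_le_div_right (pow_le_pow_left' (hle hw) 2) _
    exact hlt.not_ge ((add_le_add (hle (hw.polarize c)) hδ_le).trans hc)
  obtain ⟨⟨w, hw⟩, hlt⟩ := iInf_lt_iff.1 (hi_zero.trans_lt (pos_iff_ne_zero.2 hε))
  exact ⟨w, hw, hlt⟩

lemma IsCompetitor.exists_seq_tendsto_steinerRearr (hv : IsCompetitor K φ v v) :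
    ∃ f : ℕ → 𝕋 × W → ℝ, (∀ k, IsCompetitor K φ v (f k)) ∧
      ∀ᵐ x, Tendsto (f · x) atTop (𝓝 (steinerRearr v x)) := by
  choose f hf hasymm using fun k : ℕ =>
    hv.exists_asymmetry_lt (pow_ne_zero k (by simp : (2⁻¹ : ℝ≥0∞) ≠ 0))
  have hsum : ∑' k, volume.prod (refMeasure W) (subgraph (f k) ∆ steinerSymm (subgraph v)) ≠
      ⊤ := by
    refine ne_top_of_le_ne_top ?_ (ENNReal.tsum_le_tsum (g := fun k => 2 * 2⁻¹ ^ k) fun k => ?_)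
    · rw [ENNReal.tsum_mul_left, ENNReal.tsum_geometric]
      norm_num
    · rw [← (hf k).steinerSymm_eq,
        measure_symmDiff_steinerSymm _ (measurableSet_subgraph (hf k).measurable)]
      gcongr
      exact (hasymm k).le
  refine ⟨f, hf, ae_tendsto_of_ae_eventually_mem_subgraph_iff ?_⟩
  have hev := ae_eventually_notMem hsum
  rw [ae_prod_refMeasure] at hev
  filter_upwards [hev, (subgraph_steinerRearr_ae_eq hv.measurable hv.nonneg).mem_iff]
    with z hz hz'
  filter_upwards [hz] with k hk
  rw [hz', ← not_xor]
  exact hk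

theorem energy_steinerRearr_le (hv : Measurable v) (hv₀ : ∀ x, 0 ≤ v x) :
    K.energy φ (steinerRearr v) ≤ K.energy φ v := by
  obtain ⟨f, hf, hlim⟩ :=
    IsCompetitor.exists_seq_tendsto_steinerRearr (K := K) (φ := φ) ⟨hv, hv₀, le_rfl, rfl⟩
  exact energy_le_of_ae_tendsto (fun k => (hf k).measurable) hlim fun k => (hf k).energy_le

lemma energy_polarize_eq_of_energy_steinerRearr_eq (hv : Measurable v) (hv₀ : ∀ x, 0 ≤ v x)
    (heq : K.energy φ (steinerRearr v) = K.energy φ v) (c : 𝕋) :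
    K.energy φ (polarize c v) = K.energy φ v := by
  refine le_antisymm (energy_polarize_le c hv) ?_
  rw [← heq, ← steinerRearr_congr (steinerSymm_subgraph_polarize c hv)]
  exact energy_steinerRearr_le (measurable_polarize c hv) (polarize_nonneg c hv₀)

end CircleKernel

end RearrangementInequality

section Rigidity

variable {W : Type*}

section FirstMoment

variable [MeasurableSpace W] {ν : Measure W} {A B : Set (𝕋 × W)} {c : 𝕋}

/-- The first moment of `A` about the point `b` of the circle. -/
noncomputable def firstMoment (ν : Measure W) (A : Set (𝕋 × W)) (b : 𝕋) : ℝ≥0∞ :=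
  ∫⁻ z in A, ‖z.1 - b‖ₑ ∂((volume : Measure 𝕋).prod ν)

lemma firstMoment_congr (h : A =ᵐ[volume.prod ν] B) (b : 𝕋) :
    firstMoment ν A b = firstMoment ν B b :=
  setLIntegral_congr h

lemma firstMoment_rotate [SFinite ν] (a : 𝕋) (hA : MeasurableSet A) (b : 𝕋) :
    firstMoment ν (rotate a ⁻¹' A) b = firstMoment ν A (b + a) := by
  rw [firstMoment, firstMoment,
    ← (measurePreserving_rotate ν a).setLIntegral_comp_preimage hA (by fun_prop)]
  simp only [rotate, add_sub_add_right_eq_sub]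

lemma firstMoment_reflect [SFinite ν] (c : 𝕋) (hA : MeasurableSet A) (b : 𝕋) :
    firstMoment ν (reflect c ⁻¹' A) b = firstMoment ν A (c - b) := by
  rw [firstMoment, firstMoment,
    ← (measurePreserving_reflect ν c).setLIntegral_comp_preimage hA (by fun_prop)]
  refine lintegral_congr fun z => ?_
  rw [reflect, sub_sub_sub_cancel_left, ← enorm_neg, neg_sub]

lemma measure_polarizeSet [SFinite ν] (c : 𝕋) (hA : MeasurableSet A) :
    volume.prod ν (polarizeSet c A) = volume.prod ν A := by
  have hP := measurableSet_polarizeSet c hA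
  rw [← lintegral_indicator_one hP, ← lintegral_indicator_one hA]
  exact lintegral_eq_of_add_comp_eq (measurePreserving_reflect ν c) (measurable_one.indicator hP)
    (measurable_one.indicator hA) (pairCount_polarizeSet c A)

/- A polarization moves mass towards `0`: a mirror pair of which `A` contains only the far point
contributes the difference of the two distances. -/
lemma firstMoment_polarizeSet_add [SFinite ν] (c : 𝕋) (hA : MeasurableSet A) :
    firstMoment ν (polarizeSet c A) 0 +
      ∫⁻ z in polarizeSet c A \ A, (‖c - z.1‖ₑ - ‖z.1‖ₑ) ∂((volume : Measure 𝕋).prod ν) =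
      firstMoment ν A 0 := by
  have hP := measurableSet_polarizeSet c hA
  simp only [firstMoment, sub_zero]
  rw [← lintegral_indicator hP, ← lintegral_indicator (hP.diff hA), ← lintegral_indicator hA,
    ← lintegral_add_left (Measurable.indicator (by fun_prop) hP)]
  refine lintegral_eq_of_add_comp_eq (measurePreserving_reflect ν c)
    ((Measurable.indicator (by fun_prop) hP).add (Measurable.indicator (by fun_prop) (hP.diff hA)))
    (Measurable.indicator (by fun_prop) hA) fun z => ?_
  wlog h : ‖z.1‖ ≤ ‖c - z.1‖ generalizing z
  · have := this (reflect c z) (by simpa only [reflect, sub_sub_cancel] using (not_le.1 h).le)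
    rwa [reflect_reflect, add_comm, add_comm (indicator A _ _)] at this
  have hcz : ‖(reflect c z).1‖ₑ = ‖c - z.1‖ₑ := rfl
  classical
  rcases h.lt_or_eq with h | h
  · have hle : ‖z.1‖ₑ ≤ ‖c - z.1‖ₑ := enorm_le_iff_norm_le.2 h.le
    by_cases h₁ : z ∈ A <;> by_cases h₂ : reflect c z ∈ A <;>
      simp [mem_polarizeSet_of_near h, reflect_mem_polarizeSet_of_near h, h₁, h₂, hcz, hle]
  · simp only [indicator_apply, mem_polarizeSet_of_tie h, reflect_mem_polarizeSet_of_tie h,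
      Set.mem_sdiff, and_not_self, if_false, add_zero]

variable [IsFiniteMeasure ν]

lemma firstMoment_ne_top (A : Set (𝕋 × W)) (b : 𝕋) : firstMoment ν A b ≠ ⊤ := by
  refine ne_top_of_le_ne_top (b := ∫⁻ _ in A, ENNReal.ofReal π ∂((volume : Measure 𝕋).prod ν))
    ?_ (lintegral_mono fun z => ?_)
  · rw [setLIntegral_const]
    exact ENNReal.mul_ne_top ENNReal.ofReal_ne_top (measure_ne_top _ _)
  · rw [← ofReal_norm]
    exact ENNReal.ofReal_le_ofReal (norm_le_pi _)

lemma continuous_firstMoment (ν : Measure W) [IsFiniteMeasure ν] (A : Set (𝕋 × W)) :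
    Continuous (firstMoment ν A) := by
  refine continuous_iff_continuousAt.2 fun b => tendsto_lintegral_filter_of_dominated_convergence
    (fun _ => ENNReal.ofReal π) (.of_forall fun _ => by fun_prop)
    (.of_forall fun b' => .of_forall fun z => ?_) ?_ (.of_forall fun z => ?_)
  · rw [← ofReal_norm]
    exact ENNReal.ofReal_le_ofReal (norm_le_pi _)
  · rw [setLIntegral_const]
    exact ENNReal.mul_ne_top ENNReal.ofReal_ne_top (measure_ne_top _ _)
  · exact (Continuous.tendsto (by fun_prop) b).enorm

lemma polarizeSet_ae_eq_of_firstMoment_le (hA : MeasurableSet A)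
    (h : firstMoment ν A 0 ≤ firstMoment ν (polarizeSet c A) 0) :
    polarizeSet c A =ᵐ[volume.prod ν] A := by
  have hP := measurableSet_polarizeSet c hA
  have hgain : ∫⁻ z in polarizeSet c A \ A, (‖c - z.1‖ₑ - ‖z.1‖ₑ)
      ∂((volume : Measure 𝕋).prod ν) = 0 := by
    rw [← firstMoment_polarizeSet_add c hA] at h
    exact le_antisymm ((ENNReal.add_le_add_iff_left (firstMoment_ne_top _ _)).1
      (h.trans_eq (add_zero _).symm)) zero_le
  rw [setLIntegral_eq_zero_iff (hP.diff hA) (by fun_prop)] at hgain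
  have hsub : (polarizeSet c A : Set (𝕋 × W)) ≤ᵐ[volume.prod ν] A := by
    filter_upwards [hgain] with z hz hzP
    by_contra hzA
    rcases lt_trichotomy ‖z.1‖ ‖c - z.1‖ with hlt | heq | hlt
    · exact hlt.not_ge (enorm_le_iff_norm_le.1 (tsub_eq_zero_iff_le.1 (hz ⟨hzP, hzA⟩)))
    · exact hzA ((mem_polarizeSet_of_tie heq).1 hzP)
    · exact hzA ((iff_of_eq (polarize_of_far (· ∈ A) hlt)).1 hzP).1
  exact ae_eq_of_ae_subset_of_measure_ge hsub (measure_polarizeSet c hA).ge hP.nullMeasurableSet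
    (measure_ne_top _ _)

end FirstMoment

section EqualityCase

lemma norm_eq_norm_iff_eq_or_eq_neg {θ η : 𝕋} : ‖θ‖ = ‖η‖ ↔ θ = η ∨ θ = -η := by
  refine ⟨fun h => ?_, by rintro (rfl | rfl) <;> simp⟩
  induction θ using QuotientAddGroup.induction_on with | H x => ?_
  induction η using QuotientAddGroup.induction_on with | H y => ?_
  exact Real.Angle.cos_eq_iff_coe_eq_or_eq_neg.1 (by rw [← cos_norm_coe, h, cos_norm_coe])

lemma reflect_eq_self_of_tie {c : 𝕋} (hc : c ≠ 0) {x : 𝕋 × W} (h : ‖x.1‖ = ‖c - x.1‖) :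
    reflect c x = x := by
  refine Prod.ext ?_ rfl
  rcases norm_eq_norm_iff_eq_or_eq_neg.1 h.symm with h | h
  · exact h
  · exact absurd (by rwa [sub_eq_neg_self] at h) hc

lemma steinerSymm_preimage_rotate (a : 𝕋) (A : Set (𝕋 × W)) :
    steinerSymm (rotate a ⁻¹' A) = steinerSymm A := by
  have (w : W) : volume (fiber (rotate a ⁻¹' A) w) = volume (fiber A w) :=
    measure_preimage_add_right volume a (fiber A w)
  simp only [steinerSymm, measureReal_def, this]

variable [MeasureSpace W] [SFinite (volume : Measure W)] {v w : 𝕋 × W → ℝ}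

lemma subgraph_ae_eq_of_ae_eq (h : v =ᵐ[volume] w) : subgraph v =ᵐ[volume] subgraph w := by
  have h' : ∀ᵐ z : 𝕋 × (W × ℝ), v (z.1, z.2.1) = w (z.1, z.2.1) :=
    (Measure.quasiMeasurePreserving_fst.comp
      (volume_preserving_prodAssoc (α₁ := 𝕋) (β₁ := W) (γ₁ := ℝ)).symm.quasiMeasurePreserving).ae h
  filter_upwards [h'] with z hz
  simp only [subgraph, eq_iff_iff]
  exact iff_of_eq (congrArg (z.2.2 < ·) hz)

namespace CircleKernel

variable {K : CircleKernel W} {φ : ConvexPotential}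

lemma polarize_ae_eq_of_energy_polarize_eq (c : 𝕋) (hv : Measurable v) (hfin : K.energy φ v ≠ ⊤)
    (heq : K.energy φ (polarize c v) = K.energy φ v) :
    polarize c v =ᵐ[volume] v ∨ polarize c v =ᵐ[volume] fun x => v (reflect c x) := by
  rcases eq_or_ne c 0 with rfl | hc
  · exact .inl (polarize_zero v).eventuallyEq
  have hσ := (measurePreserving_reflect (volume : Measure W) c).quasiMeasurePreserving
  refine (one_sided_of_energy_polarize_eq c hv hfin heq).imp (fun h => ?_) fun h => ?_ <;>
    filter_upwards [h, hσ.ae h] with x hx hx' <;>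
    simp only [PeriodicRearrangement.reflect_reflect] at hx' <;>
    simp only [reflect, sub_sub_cancel] at hx' <;>
    rcases lt_trichotomy ‖x.1‖ ‖c - x.1‖ with hlt | htie | hlt
  · rw [polarize_of_near v hlt, sup_of_le_left (hx hlt)]
  · exact polarize_of_tie v htie
  · exact (polarize_of_far v hlt).trans (inf_of_le_left (hx' hlt))
  · rw [polarize_of_near v hlt, sup_of_le_right (hx hlt)]
  · rw [polarize_of_tie v htie, reflect_eq_self_of_tie hc htie]
  · exact (polarize_of_far v hlt).trans (inf_of_le_right (hx' hlt))

/- When every mirror pair is in the wrong order, the polarization of `v` is its reflection, which by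
minimality has no smaller first moment. -/
lemma polarizeSet_subgraph_ae_eq_of_firstMoment_le (hv : Measurable v) (hfin : K.energy φ v ≠ ⊤)
    {c : 𝕋} (heq : K.energy φ (polarize c v) = K.energy φ v)
    (hmin : firstMoment (refMeasure W) (subgraph v) 0 ≤
      firstMoment (refMeasure W) (subgraph v) c) :
    polarizeSet c (subgraph v) =ᵐ[volume.prod (refMeasure W)] subgraph v := by
  have hA := measurableSet_subgraph hv
  have hcongr {w : 𝕋 × W → ℝ} (h : polarize c v =ᵐ[volume] w) :
      polarizeSet c (subgraph v) =ᵐ[volume.prod (refMeasure W)] subgraph w := by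
    rw [ae_prod_refMeasure, ← subgraph_polarize]
    exact subgraph_ae_eq_of_ae_eq h
  rcases polarize_ae_eq_of_energy_polarize_eq c hv hfin heq with h | h
  · exact hcongr h
  · refine polarizeSet_ae_eq_of_firstMoment_le hA ?_
    rwa [firstMoment_congr (hcongr h), show subgraph (fun x => v (reflect c x)) =
      reflect c ⁻¹' subgraph v from rfl, firstMoment_reflect c hA, sub_zero]

lemma ae_eq_steinerRearr_of_firstMoment_le (hv : Measurable v) (hv₀ : ∀ x, 0 ≤ v x)
    (hfin : K.energy φ v ≠ ⊤) (heq : K.energy φ (steinerRearr v) = K.energy φ v)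
    (hmin : ∀ c, firstMoment (refMeasure W) (subgraph v) 0 ≤
      firstMoment (refMeasure W) (subgraph v) c) : v =ᵐ[volume] steinerRearr v := by
  have hsymm := ae_eq_steinerSymm_of_polarizeSet_ae_eq (refMeasure W) (measurableSet_subgraph hv)
    fun c => polarizeSet_subgraph_ae_eq_of_firstMoment_le hv hfin
      (energy_polarize_eq_of_energy_steinerRearr_eq hv hv₀ heq c) (hmin c)
  rw [ae_prod_refMeasure] at hsymm
  exact ae_eq_of_subgraph_ae_eq (hsymm.trans (subgraph_steinerRearr_ae_eq hv hv₀).symm)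

theorem exists_rotate_ae_eq_steinerRearr (hv : Measurable v) (hv₀ : ∀ x, 0 ≤ v x)
    (hfin : K.energy φ v ≠ ⊤) (heq : K.energy φ (steinerRearr v) = K.energy φ v) :
    ∃ a : 𝕋, (fun x => v (rotate a x)) =ᵐ[volume] steinerRearr v := by
  obtain ⟨a, -, ha⟩ := isCompact_univ.exists_isMinOn univ_nonempty
    (continuous_firstMoment (refMeasure W) (subgraph v)).continuousOn
  have hv' : Measurable fun x => v (rotate a x) :=
    hv.comp (measurePreserving_rotate volume a).measurable
  have hsub : subgraph (fun x => v (rotate a x)) = rotate a ⁻¹' subgraph v := rfl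
  have hrearr : steinerRearr (fun x => v (rotate a x)) = steinerRearr v :=
    steinerRearr_congr (by rw [hsub, steinerSymm_preimage_rotate])
  have henergy : K.energy φ (fun x => v (rotate a x)) = K.energy φ v := energy_rotate a hv
  rw [← hrearr]
  refine ⟨a, ae_eq_steinerRearr_of_firstMoment_le (K := K) (φ := φ) hv' (fun x => hv₀ _) ?_ ?_
    fun c => ?_⟩
  · rwa [henergy]
  · rw [hrearr, heq, henergy]
  · rw [hsub, firstMoment_rotate a (measurableSet_subgraph hv),
      firstMoment_rotate a (measurableSet_subgraph hv), zero_add]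
    exact ha (mem_univ (c + a))

end CircleKernel

end EqualityCase

end Rigidity

section CylinderEquality

variable {W : Type*} [MeasureSpace W] [SFinite (volume : Measure W)] {v : 𝕋 × W → ℝ}

namespace CircleKernel

variable {K : CircleKernel W} {φ : ConvexPotential}

theorem energy_steinerRearr_abs_eq_iff (hv : Measurable v) (hfin : K.energy φ v ≠ ⊤) :
    K.energy φ (steinerRearr fun x => |v x|) = K.energy φ v ↔
      ∃ ε : ℝ, (ε = 1 ∨ ε = -1) ∧
        ∃ a : 𝕋, ∀ᵐ x, v x = ε * steinerRearr (fun x => |v x|) (rotate a x) := by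
  have habs : Measurable fun x => |v x| := hv.abs
  have habs₀ (x) : 0 ≤ |v x| := abs_nonneg (v x)
  constructor
  · intro heq
    have hrearr := energy_steinerRearr_le (K := K) (φ := φ) habs habs₀
    have heq_abs := (energy_abs_le v).antisymm (heq ▸ hrearr)
    obtain ⟨a, ha⟩ := exists_rotate_ae_eq_steinerRearr habs habs₀
      (heq_abs.trans_ne hfin) (heq.trans heq_abs.symm)
    have ha' : ∀ᵐ x, |v x| = steinerRearr (fun x => |v x|) (rotate (-a) x) := by
      filter_upwards [(measurePreserving_rotate volume (-a)).quasiMeasurePreserving.ae ha] with x hx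
      rw [← hx]
      simp only [rotate, neg_add_cancel_right]
    rcases one_signed_of_energy_abs_eq hv hfin heq_abs with hsign | hsign
    · refine ⟨1, .inl rfl, -a, ?_⟩
      filter_upwards [hsign, ha'] with x hx hxa
      rw [← hxa, abs_of_nonneg hx, one_mul]
    · refine ⟨-1, .inr rfl, -a, ?_⟩
      filter_upwards [hsign, ha'] with x hx hxa
      rw [← hxa, abs_of_nonpos hx, neg_one_mul, neg_neg]
  · rintro ⟨ε, hε, a, ha⟩
    rw [energy_congr ha, ← energy_rotate a (measurable_steinerRearr habs)]
    rcases hε with rfl | rfl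
    · simp only [one_mul]
    · simp only [neg_one_mul, energy_neg]

end CircleKernel

end CylinderEquality

section RieszEnergy

lemma strictConvexOn_abs_rpow {p : ℝ} (hp : 1 < p) :
    StrictConvexOn ℝ univ fun x : ℝ => |x| ^ p := by
  refine ⟨convex_univ, fun x _ y _ hxy a b ha hb hab => ?_⟩
  simp only [smul_eq_mul]
  have habs : |a * x + b * y| ≤ a * |x| + b * |y| := by
    simpa only [abs_mul, abs_of_pos ha, abs_of_pos hb] using abs_add_le (a * x) (b * y)
  by_cases h : |x| = |y|
  · obtain rfl : x = -y := (abs_eq_abs.1 h).resolve_left hxy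
    have hy : y ≠ 0 := by
      rintro rfl
      exact hxy neg_zero
    have hlt : |a * -y + b * y| < |y| := by
      rw [show a * -y + b * y = (b - a) * y by ring, abs_mul]
      exact mul_lt_of_lt_one_left (abs_pos.2 hy) (abs_lt.2 ⟨by linarith, by linarith⟩)
    rw [abs_neg, ← add_mul, hab, one_mul]
    exact rpow_lt_rpow (abs_nonneg _) hlt (by linarith)
  · exact (rpow_le_rpow (abs_nonneg _) habs (by linarith)).trans_lt
      ((strictConvexOn_rpow hp).2 (abs_nonneg x) (abs_nonneg y) h ha hb hab)

/-- The potential `t ↦ |t| ^ p` of the Gagliardo seminorm. -/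
noncomputable def absRpow (p : ℝ) (hp : 1 < p) : ConvexPotential where
  toFun t := |t| ^ p
  strictConvexOn := strictConvexOn_abs_rpow hp
  even t := by rw [abs_neg]
  map_zero_nonneg := by positivity

/-- The periodization in the circle variable of the Riesz kernel `|x - y| ^ (-q)` on `ℝ × E`. -/
noncomputable def rieszKernel (E : Type*) [NormedAddCommGroup E] [MeasurableSpace E] [BorelSpace E]
    [SecondCountableTopology E] (q : ℝ) (hq : 1 < q) : CircleKernel E where
  profile w w' := periodizedRiesz q ‖w - w'‖
  measurable_profile := by
    have hnorm : Measurable fun z : (E × E) × ℝ => (‖z.1.1 - z.1.2‖, z.2) := by fun_prop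
    exact ((measurable_periodizedRiesz q).comp hnorm :)
  strictAntiOn_profile _ _ _ hx _ hy hxy :=
    periodizedRiesz_lt_periodizedRiesz hq (strictAntiOn_cos hx hy hxy)
  profile_pi_pos _ _ := periodizedRiesz_pos (by linarith) _ _

end RieszEnergy

section Covering

lemma lintegral_eq_lintegral_addCircle {T : ℝ} [hT : Fact (0 < T)] {f : ℝ → ℝ≥0∞}
    {F : AddCircle T → ℝ≥0∞} (hf : Measurable f) (hF : ∀ x : ℝ, F x = ∑' k : ℤ, f (x + k * T)) :
    ∫⁻ x, f x = ∫⁻ θ, F θ := by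
  rw [← setLIntegral_univ f, ← iUnion_Ioc_add_zsmul hT.out 0,
    lintegral_iUnion (fun _ => measurableSet_Ioc) (pairwise_disjoint_Ioc_add_zsmul _ _),
    ← AddCircle.lintegral_preimage T 0 F]
  simp only [hF]
  rw [lintegral_tsum fun k => by fun_prop]
  refine tsum_congr fun k => ?_
  rw [← (measurePreserving_add_right volume (k * T)).setLIntegral_comp_preimage
    measurableSet_Ioc hf, preimage_add_const_Ioc]
  congr 3 <;> rw [zsmul_eq_mul] <;> push_cast <;> ring

variable {W : Type*}

/-- The covering map from `ℝ × W` to the cylinder `𝕋 × W`; functions on `ℝ × W` that are periodic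
in the first variable are the functions on the cylinder composed with it. -/
noncomputable def wrap (x : ℝ × W) : 𝕋 × W := (x.1, x.2)

lemma wrap_add_int_mul (t : ℝ) (w : W) (k : ℤ) : wrap (t + k * (2 * π), w) = wrap (t, w) := by
  simp only [wrap, AddCircle.coe_add, ← zsmul_eq_mul, AddCircle.coe_zsmul, AddCircle.coe_period,
    smul_zero, add_zero]

variable [MeasurableSpace W]

lemma measurable_wrap : Measurable (wrap : ℝ × W → 𝕋 × W) :=
  (AddCircle.measurable_mk'.comp measurable_fst).prodMk measurable_snd

lemma exists_measurable_comp_wrap {u : ℝ × W → ℝ} (hu : Measurable u)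
    (hper : ∀ x : ℝ × W, u (x.1 + 2 * π, x.2) = u x) :
    ∃ v : 𝕋 × W → ℝ, Measurable v ∧ u = v ∘ wrap := by
  let e := AddCircle.measurableEquivIoc (2 * π) 0
  refine ⟨fun z => u (e z.1, z.2), hu.comp ?_, funext fun x => ?_⟩
  · exact (measurable_subtype_coe.comp (e.measurable.comp measurable_fst)).prodMk measurable_snd
  · have hfib : Periodic (fun t => u (t, x.2)) (2 * π) := fun t => hper (t, x.2)
    have hcoe : ((e x.1 : ℝ) : 𝕋) = x.1 := e.symm_apply_apply x.1
    have := congrArg hfib.lift hcoe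
    simp only [hfib.lift_coe] at this
    exact this.symm

section Integral

variable {W : Type*} [MeasureSpace W] [SFinite (volume : Measure W)]

lemma quasiMeasurePreserving_coe_addCircle {T : ℝ} [hT : Fact (0 < T)] :
    Measure.QuasiMeasurePreserving ((↑) : ℝ → AddCircle T) volume volume :=
  ⟨AddCircle.measurable_mk', (isAddFundamentalDomain_Ioc' hT.out 0).absolutelyContinuous_map.trans
    (AddCircle.measurePreserving_mk T 0).map_eq.absolutelyContinuous⟩

lemma quasiMeasurePreserving_wrap :
    Measure.QuasiMeasurePreserving (wrap : ℝ × W → 𝕋 × W) volume volume :=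
  QuasiMeasurePreserving.prodMap quasiMeasurePreserving_coe_addCircle (.id volume)

lemma measurePreserving_wrap : MeasurePreserving (wrap : ℝ × W → 𝕋 × W)
    (volume.restrict {x | x.1 ∈ Ioo (-π) π}) volume := by
  have hstrip : {x : ℝ × W | x.1 ∈ Ioo (-π) π} = Ioo (-π) π ×ˢ univ := by
    rw [prod_univ]; rfl
  rw [hstrip, Measure.volume_eq_prod, ← Measure.prod_restrict, Measure.restrict_univ,
    Measure.restrict_congr_set Ioo_ae_eq_Ioc, show Ioc (-π) π = Ioc (-π) (-π + 2 * π) by ring_nf]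
  exact (AddCircle.measurePreserving_mk (2 * π) (-π)).prod (.id volume)

lemma ae_comp_wrap_iff {P : 𝕋 × W → Prop} (hP : MeasurableSet {z | P z}) :
    (∀ᵐ x : ℝ × W, P (wrap x)) ↔ ∀ᵐ z, P z := by
  refine ⟨fun h => ?_, quasiMeasurePreserving_wrap.ae⟩
  rw [← measurePreserving_wrap.map_eq, ae_map_iff measurable_wrap.aemeasurable hP]
  exact ae_restrict_of_ae h

lemma lintegral_eq_lintegral_wrap {f : ℝ × W → ℝ≥0∞} {F : 𝕋 × W → ℝ≥0∞} (hf : Measurable f)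
    (hF : Measurable F) (h : ∀ x, F (wrap x) = ∑' k : ℤ, f (x.1 + k * (2 * π), x.2)) :
    ∫⁻ x, f x = ∫⁻ z, F z := by
  rw [Measure.volume_eq_prod, lintegral_prod_symm _ hf.aemeasurable, Measure.volume_eq_prod,
    lintegral_prod_symm _ hF.aemeasurable]
  exact lintegral_congr fun w =>
    lintegral_eq_lintegral_addCircle (hf.comp measurable_prodMk_right) fun t => h (t, w)

end Integral

end Covering

section Gagliardo

lemma ofReal_abs_rpow_div_sqrt_rpow {p d r : ℝ} (hp : p ≠ 0) (hr : 0 ≤ r) (hd : r = 0 → d = 0)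
    (q : ℝ) : ENNReal.ofReal (|d| ^ p / √r ^ q) =
      ENNReal.ofReal (|d| ^ p) * ENNReal.ofReal r ^ (-(q / 2)) := by
  rcases hr.eq_or_lt' with hr | hr
  · simp only [hd hr, abs_zero, zero_rpow hp, zero_div, ENNReal.ofReal_zero, zero_mul]
  · rw [ENNReal.ofReal_rpow_of_pos hr, ← ENNReal.ofReal_mul (by positivity), div_eq_mul_inv,
      sqrt_eq_rpow, ← rpow_mul hr.le, ← rpow_neg hr.le]
    ring_nf

variable {E : Type*} [NormedAddCommGroup E] [MeasureSpace E] [BorelSpace E]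
  [SecondCountableTopology E] {p q : ℝ} {v : 𝕋 × E → ℝ}

lemma density_rieszKernel_wrap (hp : 1 < p) (hq : 1 < q) (v : 𝕋 × E → ℝ) (x y : ℝ × E) :
    (rieszKernel E q hq).density (absRpow p hp) v (wrap x) (wrap y) =
      ∑' k : ℤ, ENNReal.ofReal (|v (wrap x) - v (wrap y)| ^ p /
        √((x.1 - (y.1 + k * (2 * π))) ^ 2 + ‖x.2 - y.2‖ ^ 2) ^ q) := by
  have hdiag (k : ℤ) (h : (x.1 - (y.1 + k * (2 * π))) ^ 2 + ‖x.2 - y.2‖ ^ 2 = 0) :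
      v (wrap x) - v (wrap y) = 0 := by
    obtain ⟨h₁, h₂⟩ := (add_eq_zero_iff_of_nonneg (sq_nonneg _) (sq_nonneg _)).1 h
    rw [sub_eq_zero, ← wrap_add_int_mul y.1 y.2 k,
      ← sub_eq_zero.1 (pow_eq_zero_iff two_ne_zero |>.1 h₁),
      ← sub_eq_zero.1 (norm_eq_zero.1 (pow_eq_zero_iff two_ne_zero |>.1 h₂))]
  have hp₀ : p ≠ 0 := (zero_lt_one.trans hp).ne'
  simp only [fun k => ofReal_abs_rpow_div_sqrt_rpow hp₀ (by positivity) (hdiag k) q,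
    ENNReal.tsum_mul_left]
  have hkernel : rieszKernel E q hq (wrap x) (wrap y) =
      periodizedRiesz q ‖x.2 - y.2‖ ‖((y.1 - x.1 : ℝ) : 𝕋)‖ :=
    congrArg (periodizedRiesz q ‖x.2 - y.2‖) (norm_sub_rev (x.1 : 𝕋) y.1)
  rw [CircleKernel.density, hkernel, periodizedRiesz_norm_coe, periodizedRiesz]
  refine congrArg₂ (· * ·) rfl (tsum_congr fun k => ?_)
  congr 3
  ring

lemma lintegral_gagliardo_quotient_comp_wrap [SFinite (volume : Measure E)] (hp : 1 < p)
    (hq : 1 < q) (hv : Measurable v) (x : ℝ × E) :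
    ∫⁻ y : ℝ × E, ENNReal.ofReal (|v (wrap x) - v (wrap y)| ^ p /
        √((x.1 - y.1) ^ 2 + ‖x.2 - y.2‖ ^ 2) ^ q) =
      ∫⁻ y, (rieszKernel E q hq).density (absRpow p hp) v (wrap x) y := by
  have hv_wrap : Measurable fun y => v (wrap y) := hv.comp measurable_wrap
  have hquot : Measurable fun y : ℝ × E => |v (wrap x) - v (wrap y)| ^ p /
      √((x.1 - y.1) ^ 2 + ‖x.2 - y.2‖ ^ 2) ^ q :=
    ((hv_wrap.const_sub _).abs.pow_const p).div (by fun_prop)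
  refine lintegral_eq_lintegral_wrap hquot.ennreal_ofReal
    ((CircleKernel.measurable_density hv).comp measurable_prodMk_left) fun y => ?_
  rw [density_rieszKernel_wrap]
  exact tsum_congr fun k => by rw [wrap_add_int_mul]

theorem gagP_comp_wrap {m : ℕ} {s : ℝ} (hp : 1 < p) (hq : 1 < (m : ℝ) + 1 + s * p)
    {v : 𝕋 × EuclideanSpace ℝ (Fin m) → ℝ} (hv : Measurable v) :
    gagP m s p (v ∘ wrap) = (rieszKernel _ _ hq).energy (absRpow p hp) v := by
  have hdens := CircleKernel.measurable_density (K := rieszKernel _ _ hq) (φ := absRpow p hp) hv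
  simp only [gagP, comp_apply, lintegral_gagliardo_quotient_comp_wrap hp hq hv]
  rw [measurePreserving_wrap.lintegral_comp hdens.lintegral_prod_right', CircleKernel.energy]
  exact (lintegral_prod _ hdens.aemeasurable).symm

end Gagliardo

section PerRearr

lemma sub_floor_mul_mem_Ico (t : ℝ) : t - 2 * π * ⌊(t + π) / (2 * π)⌋ ∈ Ico (-π) π := by
  have hlow := (le_div_iff₀ two_pi_pos).1 (Int.floor_le ((t + π) / (2 * π)))
  have hup := (div_lt_iff₀ two_pi_pos).1 (Int.lt_floor_add_one ((t + π) / (2 * π)))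
  constructor <;> linarith

lemma norm_coe_eq_abs_of_mem_Ico {t : ℝ} (ht : t ∈ Ico (-π) π) : ‖(t : 𝕋)‖ = |t| := by
  rw [AddCircle.norm_coe_eq_abs_iff _ two_pi_pos.ne', abs_of_pos two_pi_pos,
    mul_div_cancel_left₀ _ two_ne_zero]
  exact abs_le.2 ⟨ht.1, ht.2.le⟩

lemma volume_Ioo_inter_preimage_coe {A : Set 𝕋} (hA : MeasurableSet A) :
    volume (Ioo (-π) π ∩ (↑) ⁻¹' A) = volume A := by
  rw [← (AddCircle.measurePreserving_mk (2 * π) (-π)).measure_preimage hA.nullMeasurableSet,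
    inter_comm, ← Measure.restrict_apply (AddCircle.measurable_mk' hA),
    Measure.restrict_congr_set Ioo_ae_eq_Ioc, show -π + 2 * π = π by ring]

variable {W : Type*} [MeasurableSpace W] {v : 𝕋 × W → ℝ}

lemma mem_symmSet_iff_mem_steinerSymm {A : Set (𝕋 × W)} (hA : MeasurableSet A) {t : ℝ}
    (ht : t ∈ Ico (-π) π) (w : W) :
    t ∈ symmSet {y | y ∈ Ioo (-π) π ∧ ((y : 𝕋), w) ∈ A} ↔ ((t : 𝕋), w) ∈ steinerSymm A := by
  have hvol : volume {y : ℝ | y ∈ Ioo (-π) π ∧ ((y : 𝕋), w) ∈ A} = volume (fiber A w) :=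
    volume_Ioo_inter_preimage_coe (measurableSet_fiber hA w)
  rw [symmSet, hvol, steinerSymm, mem_ofPred_eq, norm_coe_eq_abs_of_mem_Ico ht, abs_lt]
  rfl

theorem perRearr_comp_wrap (hv : Measurable v) (x : ℝ × W) :
    perRearr (fun t => v (wrap (t, x.2))) x.1 = steinerRearr v (wrap x) := by
  simp only [perRearr, periodize, symmRearr]
  have hmem := sub_floor_mul_mem_Ico x.1
  have hcoe : wrap (x.1 - 2 * π * ⌊(x.1 + π) / (2 * π)⌋, x.2) = wrap x := by
    rw [← wrap_add_int_mul x.1 x.2 (-⌊(x.1 + π) / (2 * π)⌋)]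
    congr 2
    push_cast
    ring
  rw [← hcoe]
  generalize x.1 - 2 * π * ⌊(x.1 + π) / (2 * π)⌋ = t at hmem
  set S : Set ℝ := {τ | ((t : 𝕋), x.2, τ) ∈ steinerSymm (subgraph v)}
  have hS : MeasurableSet S := measurableSet_preimage (by fun_prop)
    (measurableSet_steinerSymm (measurableSet_subgraph hv))
  have hind (τ : ℝ) : (symmSet {y | y ∈ Ioo (-π) π ∧ τ < v (wrap (y, x.2))}).indicator
      (fun _ => (1 : ℝ)) t = S.indicator 1 τ :=
    indicator_eq_indicator (f := fun _ => (1 : ℝ)) (g := 1) (mem_symmSet_iff_mem_steinerSymm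
      (measurableSet_subgraph hv) hmem (x.2, τ)) rfl
  simp only [hind]
  rw [integral_indicator_one hS, measureReal_restrict_apply hS]
  rfl

end PerRearr

section Descent

variable {W : Type*} [MeasureSpace W] [SFinite (volume : Measure W)] {v w : 𝕋 × W → ℝ}

lemma eq_mul_abs_of_eq_mul {ε a b : ℝ} (hε : ε = 1 ∨ ε = -1) (hb : 0 ≤ b) (h : a = ε * b) :
    a = ε * |a| := by
  rcases hε with rfl | rfl <;> simp [h, abs_of_nonneg hb]

lemma exists_ae_eq_mul_rotate_iff (hv : Measurable v) (hw : Measurable w) (hw₀ : ∀ z, 0 ≤ w z)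
    {ε : ℝ} (hε : ε = 1 ∨ ε = -1) :
    (∃ a : 𝕋, ∀ᵐ z, v z = ε * w (rotate a z)) ↔
      (∀ᵐ x : ℝ × W, v (wrap x) = ε * |v (wrap x)|) ∧
        ∃ a : ℝ, ∀ᵐ x : ℝ × W, v (wrap x) = ε * w (wrap (x.1 + a, x.2)) := by
  have hlift (a : ℝ) : (∀ᵐ x : ℝ × W, v (wrap x) = ε * w (wrap (x.1 + a, x.2))) ↔
      ∀ᵐ z, v z = ε * w (rotate a z) :=
    ae_comp_wrap_iff (P := fun z => v z = ε * w (rotate a z)) (measurableSet_eq_fun hv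
      ((hw.comp (measurePreserving_rotate (volume : Measure W) a).measurable).const_mul ε))
  simp only [hlift, QuotientAddGroup.mk_surjective.exists]
  refine ⟨fun ⟨a, ha⟩ => ⟨?_, a, ha⟩, And.right⟩
  filter_upwards [(hlift a).2 ha] with x hx using eq_mul_abs_of_eq_mul hε (hw₀ _) hx

end Descent

end PeriodicRearrangement

open PeriodicRearrangement in
theorem stmt_7_general (m : ℕ) (s p : ℝ) (hs : 0 < m + s * p) (hp : 1 < p)
    (u : ℝ × EuclideanSpace ℝ (Fin m) → ℝ) (hu : Measurable u)
    (huper : ∀ x : ℝ × EuclideanSpace ℝ (Fin m), u (x.1 + 2 * π, x.2) = u x)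
    (hfin : gagP m s p u ≠ ⊤) :
    gagSeminorm m s p (perRearr1 m u) = gagSeminorm m s p u ↔
      ∃ ε : ℝ, (ε = 1 ∨ ε = -1) ∧
        (∀ᵐ x ∂(volume : Measure (ℝ × EuclideanSpace ℝ (Fin m))), u x = ε * |u x|) ∧
        ∃ a : ℝ, ∀ᵐ x ∂(volume : Measure (ℝ × EuclideanSpace ℝ (Fin m))),
          u x = ε * perRearr1 m u (x.1 + a, x.2) := by
  obtain ⟨v, hv, rfl⟩ := exists_measurable_comp_wrap hu huper
  have hq : 1 < (m : ℝ) + 1 + s * p := by linarith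
  have hp' : 1 / p ≠ 0 := by positivity
  have hrearr : perRearr1 m (v ∘ wrap) = steinerRearr (fun z => |v z|) ∘ wrap :=
    funext fun x => perRearr_comp_wrap (v := fun z => |v z|) hv.abs x
  have hw := measurable_steinerRearr hv.abs
  rw [gagP_comp_wrap hp hq hv] at hfin
  rw [gagSeminorm, gagSeminorm, (ENNReal.rpow_left_injective hp').eq_iff, hrearr,
    gagP_comp_wrap hp hq hw, gagP_comp_wrap hp hq hv,
    CircleKernel.energy_steinerRearr_abs_eq_iff hv hfin]
  exact exists_congr fun ε => and_congr_right fun hε =>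
    exists_ae_eq_mul_rotate_iff hv hw (steinerRearr_nonneg _) hε

theorem stmt_7 (m : ℕ) (s p : ℝ) (hs0 : 0 < s) (hs1 : s < 1) (hp : 1 < p)
    (u : ℝ × EuclideanSpace ℝ (Fin m) → ℝ) (hu : Measurable u)
    (huper : ∀ x : ℝ × EuclideanSpace ℝ (Fin m), u (x.1 + 2 * π, x.2) = u x)
    (hfin : gagP m s p u ≠ ⊤) :
    gagSeminorm m s p (perRearr1 m u) = gagSeminorm m s p u ↔
      ∃ ε : ℝ, (ε = 1 ∨ ε = -1) ∧
        (∀ᵐ x ∂(volume : Measure (ℝ × EuclideanSpace ℝ (Fin m))), u x = ε * |u x|) ∧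
        ∃ a : ℝ, ∀ᵐ x ∂(volume : Measure (ℝ × EuclideanSpace ℝ (Fin m))),
          u x = ε * perRearr1 m u (x.1 + a, x.2) :=
  stmt_7_general m s p (by positivity) hp u hu huper hfin
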